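/- arXiv:1701.04633 — 3 statements merged into one kernel-verified Lean document; each statement's English description precedes it below -/
import Mathlib

section
/- Let R be a commutative ring with identity and let m, n be coprime positive integers. Then the map (J, J') ↦ J ∩ J' is a bijection from the set of pairs (J, J') where J is an ideal of R with |R/J| = m and J' is an ideal of R with |R/J'| = n, onto the set of ideals I of R with |R/I| = m·n. In particular, a_{mn}(R) = a_m(R)·a_n(R). -/
/-!
By Lagrange, an ideal of index `k` contains the integer `k`.  Hence ideals `J`, `J'` of coprime
indices `m`, `n` are comaximal, and the Chinese remainder theorem gives `|R/(J ∩ J')| = m * n`.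
The inverse map is `I ↦ (I + (m), I + (n))`.  Writing `1 = u * m + v * n` shows that
`J = (J ∩ J') + (m)`, which is injectivity, and that `I = (I + (m)) ∩ (I + (n))` as soon as
`m * n ∈ I`.  For surjectivity the indices of `I + (m)` and `I + (n)` have product `m * n`, and
by Cauchy every prime dividing the first (second) divides `m` (`n`), so they are `m` and `n`.
-/

namespace IdealCount

variable {R : Type*} [CommRing R]

lemma natCast_card_mem (J : Ideal R) : ((Nat.card (R ⧸ J) : ℕ) : R) ∈ J := by
  rw [← Ideal.Quotient.eq_zero_iff_mem, map_natCast, ← nsmul_one]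
  exact card_nsmul_eq_zero'

lemma exists_bezout {m n : ℕ} (hmn : Nat.Coprime m n) :
    ∃ u v : R, u * (m : R) + v * (n : R) = 1 := by
  obtain ⟨u, v, h⟩ := Nat.isCoprime_iff_coprime.mpr hmn
  exact ⟨u, v, by exact_mod_cast congrArg (Int.cast : ℤ → R) h⟩

lemma isCoprime_of_natCast_mem {m n : ℕ} (hmn : Nat.Coprime m n) {J K : Ideal R}
    (hJ : (m : R) ∈ J) (hK : (n : R) ∈ K) : IsCoprime J K := by
  obtain ⟨u, v, h⟩ := exists_bezout (R := R) hmn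
  rw [Ideal.isCoprime_iff_exists]
  exact ⟨_, J.mul_mem_left u hJ, _, K.mul_mem_left v hK, h⟩

lemma card_quotient_inf {J K : Ideal R} (h : IsCoprime J K) :
    Nat.card (R ⧸ J ⊓ K) = Nat.card (R ⧸ J) * Nat.card (R ⧸ K) := by
  rw [Nat.card_congr (Ideal.quotientInfEquivQuotientProd J K h).toEquiv, Nat.card_prod]

/-- The first component of the pair `(J, K)` is recovered from `J ⊓ K`. -/
lemma inf_sup_span {m n : ℕ} (hmn : Nat.Coprime m n) {J K : Ideal R}
    (hJ : (m : R) ∈ J) (hK : (n : R) ∈ K) : J ⊓ K ⊔ Ideal.span {(m : R)} = J := by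
  apply le_antisymm
  · exact sup_le inf_le_left (by simpa [Ideal.span_le] using hJ)
  · intro x hx
    obtain ⟨u, v, h⟩ := exists_bezout (R := R) hmn
    have hx' : x = v * x * n + u * x * m := by linear_combination (-x) * h
    rw [hx']
    refine Submodule.add_mem_sup ⟨?_, K.mul_mem_left _ hK⟩
      (Ideal.mul_mem_left _ _ (Ideal.mem_span_singleton_self _))
    exact J.mul_mem_right _ (J.mul_mem_left _ hx)

lemma mul_mem_of_mem_sup {a b x : R} {I : Ideal R} (hab : a * b ∈ I)
    (hx : x ∈ I ⊔ Ideal.span {a}) : b * x ∈ I := by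
  obtain ⟨i, hi, y, hy, rfl⟩ := Submodule.mem_sup.mp hx
  obtain ⟨r, rfl⟩ := Ideal.mem_span_singleton'.mp hy
  have : b * (i + r * a) = b * i + r * (a * b) := by ring
  rw [this]
  exact I.add_mem (I.mul_mem_left _ hi) (I.mul_mem_left _ hab)

lemma sup_span_inf_sup_span {m n : ℕ} (hmn : Nat.Coprime m n) {I : Ideal R}
    (hI : (m : R) * (n : R) ∈ I) :
    (I ⊔ Ideal.span {(m : R)}) ⊓ (I ⊔ Ideal.span {(n : R)}) = I := by
  apply le_antisymm
  · rintro x ⟨h₁, h₂⟩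
    obtain ⟨u, v, h⟩ := exists_bezout (R := R) hmn
    have hx : x = u * (m * x) + v * (n * x) := by linear_combination (-x) * h
    rw [hx]
    exact I.add_mem (I.mul_mem_left _ (mul_mem_of_mem_sup (by rwa [mul_comm]) h₂))
      (I.mul_mem_left _ (mul_mem_of_mem_sup hI h₁))
  · exact le_inf le_sup_left le_sup_left

/-- If `m` kills the finite ring `R ⧸ J`, then by Cauchy's theorem only primes dividing `m` can
divide its order. -/
lemma coprime_card_of_natCast_mem {m n : ℕ} (hmn : Nat.Coprime m n) {J : Ideal R}
    [Finite (R ⧸ J)] (hJ : (m : R) ∈ J) : Nat.Coprime (Nat.card (R ⧸ J)) n := by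
  refine Nat.Coprime.symm (Nat.coprime_of_dvd fun p hp hpn hpJ => ?_)
  have := Fact.mk hp
  obtain ⟨x, hx⟩ := exists_prime_addOrderOf_dvd_card' p hpJ
  have hm0 : m • x = 0 := by
    rw [nsmul_eq_mul, ← map_natCast (Ideal.Quotient.mk J), Ideal.Quotient.eq_zero_iff_mem.mpr hJ,
      zero_mul]
  have hpm : p ∣ m := hx ▸ addOrderOf_dvd_of_nsmul_eq_zero hm0
  exact Nat.not_coprime_of_dvd_of_dvd hp.one_lt hpm hpn hmn

lemma bijOn_inf {m n : ℕ} (hm : 0 < m) (hn : 0 < n) (hmn : Nat.Coprime m n) :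
    Set.BijOn (fun p : Ideal R × Ideal R => p.1 ⊓ p.2)
      {p : Ideal R × Ideal R | Nat.card (R ⧸ p.1) = m ∧ Nat.card (R ⧸ p.2) = n}
      {I : Ideal R | Nat.card (R ⧸ I) = m * n} := by
  have mem {k : ℕ} {J : Ideal R} (h : Nat.card (R ⧸ J) = k) : (k : R) ∈ J :=
    h ▸ natCast_card_mem J
  refine ⟨?_, ?_, ?_⟩
  · rintro ⟨J, K⟩ ⟨hJ, hK⟩
    dsimp only at hJ hK
    change Nat.card (R ⧸ J ⊓ K) = m * n
    rw [card_quotient_inf (isCoprime_of_natCast_mem hmn (mem hJ) (mem hK)), hJ, hK]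
  · rintro ⟨J, K⟩ ⟨hJ, hK⟩ ⟨J', K'⟩ ⟨hJ', hK'⟩ h
    dsimp only at hJ hK hJ' hK' h
    refine Prod.ext ?_ ?_
    · change J = J'
      rw [← inf_sup_span hmn (mem hJ) (mem hK), h, inf_sup_span hmn (mem hJ') (mem hK')]
    · change K = K'
      rw [← inf_sup_span hmn.symm (mem hK) (mem hJ), inf_comm, h, inf_comm,
        inf_sup_span hmn.symm (mem hK') (mem hJ')]
  · intro I hI
    change Nat.card (R ⧸ I) = m * n at hI
    have hmnI : (m : R) * (n : R) ∈ I := by exact_mod_cast mem hI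
    have hinf := sup_span_inf_sup_span hmn hmnI
    set J := I ⊔ Ideal.span {(m : R)}
    set K := I ⊔ Ideal.span {(n : R)}
    have hJ : (m : R) ∈ J := Ideal.mem_sup_right (Ideal.mem_span_singleton_self _)
    have hK : (n : R) ∈ K := Ideal.mem_sup_right (Ideal.mem_span_singleton_self _)
    have hcard : Nat.card (R ⧸ J) * Nat.card (R ⧸ K) = m * n := by
      rw [← card_quotient_inf (isCoprime_of_natCast_mem hmn hJ hK), hinf, hI]
    have hpos : 0 < Nat.card (R ⧸ J) * Nat.card (R ⧸ K) := hcard ▸ Nat.mul_pos hm hn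
    have : Finite (R ⧸ J) := Nat.finite_of_card_ne_zero (Nat.pos_of_mul_pos_right hpos).ne'
    have : Finite (R ⧸ K) := Nat.finite_of_card_ne_zero (Nat.pos_of_mul_pos_left hpos).ne'
    have hJn := coprime_card_of_natCast_mem hmn hJ
    have hKm := coprime_card_of_natCast_mem hmn.symm hK
    have hJm : Nat.card (R ⧸ J) = m := Nat.dvd_antisymm
      (hJn.dvd_of_dvd_mul_right (hcard ▸ dvd_mul_right _ _))
      (hKm.symm.dvd_of_dvd_mul_right (hcard ▸ dvd_mul_right _ _))
    refine ⟨(J, K), ⟨hJm, ?_⟩, hinf⟩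
    rw [hJm] at hcard
    exact Nat.eq_of_mul_eq_mul_left hm hcard

end IdealCount


/-- For coprime `m, n`, the map `(J, J') ↦ J ∩ J'` is a bijection from pairs of ideals of
indices `m` and `n` onto ideals of index `m·n`; in particular
`a_{mn}(R) = a_m(R) · a_n(R)`. -/
theorem ideal_count_multiplicative (R : Type*) [CommRing R] (m n : ℕ)
    (hm : 0 < m) (hn : 0 < n) (hmn : Nat.Coprime m n) :
    Set.BijOn (fun p : Ideal R × Ideal R => p.1 ⊓ p.2)
      {p : Ideal R × Ideal R | Nat.card (R ⧸ p.1) = m ∧ Nat.card (R ⧸ p.2) = n}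
      {I : Ideal R | Nat.card (R ⧸ I) = m * n} ∧
    Nat.card {I : Ideal R // Nat.card (R ⧸ I) = m * n} =
      Nat.card {J : Ideal R // Nat.card (R ⧸ J) = m} *
        Nat.card {J' : Ideal R // Nat.card (R ⧸ J') = n} := by
  have h := IdealCount.bijOn_inf (R := R) hm hn hmn
  refine ⟨h, ?_⟩
  rw [← Nat.card_prod]
  have e := Equiv.subtypeProdEquivProd
    (p := fun J : Ideal R => Nat.card (R ⧸ J) = m) (q := fun K : Ideal R => Nat.card (R ⧸ K) = n)
  exact Nat.card_congr ((h.equiv _).symm.trans e)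
end

section
/- Let d ≥ 1 and for T > 0 let M(T) be the number of subgroups of ℤ^d of finite index at most T. Then M(T)/T^d → (∏_{n=2}^d ζ(n))/d as T → ∞, where ζ is the Riemann zeta function (the product being empty, hence 1, when d = 1). -/
open Filter Topology
open scoped ENNReal

/-!
A subgroup `Λ` of `ℤ × G` of finite index is determined by its projection `kℤ` to `ℤ`, its
intersection `Λ'` with `G`, and the class modulo `Λ'` of any `v` with `(k, v) ∈ Λ`; every triple
occurs, and `[ℤ × G : Λ] = k [G : Λ']`. Hence a pair `(k, Λ')` comes from exactly `[G : Λ']`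
subgroups (`card_shape_fiber`), which for every weight `φ` gives (`tsum_finIdx_succ`)
`∑_{Λ ≤ ℤ^(d+1)} φ([Λ]) = ∑_k ∑_{Λ' ≤ ℤ^d} [Λ'] φ(k [Λ'])`, writing `[Λ]` for the index.

The factor `[Λ']` makes it natural to treat all moments
`S(d, j, T) = ∑_{[Λ] ≤ T} [Λ]^j` (`momentSum`) at once: the identity becomes
`S(d+1, j, T) = ∑_k k^j S(d, j+1, T/k)`. By induction on `d ≥ 1` one proves
`S(d, j, T) ∼ (∏_{n=2}^d ζ(n)) T^(d+j) / (d+j)` for every `j`, together with a bound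
`S(d, j, T) ≤ C T^(d+j)` for all `T > 0` (`HasMoments`). For `d = 1` this is the asymptotics of
`∑_{k ≤ T} k^j`. In the induction step the `k`-th term divided by `T^(d+1+j)` tends to
`k^(-(d+1))` times the previous constant and is at most `C k^(-(d+1))`, so dominated convergence
for series yields the new factor `ζ(d+1)`. The theorem is the case `j = 0`.

The sums are taken in `ℝ≥0∞`, so they may be rearranged before they are known to be finite.
-/

/-! ### Subgroups of `ℤ × G` -/

/-- The finite-index subgroups of an additive group. -/
abbrev FinIdx (G : Type*) [AddGroup G] : Type _ := {Λ : AddSubgroup G // Λ.index ≠ 0}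

lemma index_eq_mul {G : Type*} [AddCommGroup G] (Λ : AddSubgroup (ℤ × G)) :
    Λ.index = (Λ.map (AddMonoidHom.fst ℤ G)).index * (Λ.comap (AddMonoidHom.inr ℤ G)).index := by
  have hr : (AddMonoidHom.inr ℤ G).range = (AddMonoidHom.fst ℤ G).ker := by
    ext ⟨x, g⟩
    simp [-AddMonoidHom.ker_fst, AddMonoidHom.mem_ker, eq_comm]
  have hf : (AddMonoidHom.fst ℤ G).range = ⊤ :=
    AddMonoidHom.range_eq_top.2 fun x => ⟨(x, 0), rfl⟩
  rw [AddSubgroup.index_comap, AddSubgroup.index_map, hr, hf, AddSubgroup.index_top, mul_one,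
    ← AddSubgroup.relIndex_sup_left (AddMonoidHom.fst ℤ G).ker Λ, mul_comm,
    AddSubgroup.relIndex_mul_index le_sup_left]

lemma int_subgroup_eq (K : AddSubgroup ℤ) : K = AddSubgroup.zmultiples (K.index : ℤ) := by
  obtain ⟨a, ha⟩ := Int.subgroup_cyclic K
  rw [← AddSubgroup.zmultiples_eq_closure] at ha
  rw [ha, Int.index_zmultiples, Int.zmultiples_natAbs]

/-- The first projection of a subgroup of `ℤ × G` (recorded by its index in `ℤ`) together with its
intersection with `G`. -/
noncomputable def shape {G : Type*} [AddCommGroup G] (Λ : FinIdx (ℤ × G)) : ℕ+ × FinIdx G :=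
  (⟨(Λ.1.map (AddMonoidHom.fst ℤ G)).index,
    Nat.pos_of_ne_zero (left_ne_zero_of_mul (index_eq_mul Λ.1 ▸ Λ.2))⟩,
   ⟨Λ.1.comap (AddMonoidHom.inr ℤ G), right_ne_zero_of_mul (index_eq_mul Λ.1 ▸ Λ.2)⟩)

lemma index_eq_of_shape {G : Type*} [AddCommGroup G] {Λ : FinIdx (ℤ × G)} {p : ℕ+ × FinIdx G}
    (h : shape Λ = p) : Λ.1.index = p.1 * p.2.1.index := by
  subst h
  exact index_eq_mul Λ.1

/-- A subgroup with first projection `kℤ` and intersection `Λ'` with `G` is generated by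
`0 × Λ'` and one element `(k, v)`, where `v` is unique modulo `Λ'` and arbitrary. -/
lemma card_shape_fiber {G : Type*} [AddCommGroup G] (p : ℕ+ × FinIdx G) :
    ENat.card {Λ : FinIdx (ℤ × G) // shape Λ = p} = p.2.1.index := by
  obtain ⟨k, Λ', hΛ'⟩ := p
  have hmap : ∀ Λ : {Λ : FinIdx (ℤ × G) // shape Λ = (k, ⟨Λ', hΛ'⟩)},
      Λ.1.1.map (AddMonoidHom.fst ℤ G) = AddSubgroup.zmultiples (k : ℤ) := by
    rintro ⟨Λ, h⟩
    have h1 := congrArg (fun q => (q.1 : ℕ)) h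
    simp only [shape, PNat.mk_coe] at h1
    rw [int_subgroup_eq (Λ.1.map _), h1]
  have hcomap : ∀ Λ : {Λ : FinIdx (ℤ × G) // shape Λ = (k, ⟨Λ', hΛ'⟩)}, ∀ g,
      ((0 : ℤ), g) ∈ Λ.1.1 ↔ g ∈ Λ' := by
    rintro ⟨Λ, h⟩ g
    have h1 := congrArg (fun q => q.2.1) h
    simp only [shape] at h1
    exact (SetLike.ext_iff.1 h1 g)
  have hex : ∀ Λ : {Λ : FinIdx (ℤ × G) // shape Λ = (k, ⟨Λ', hΛ'⟩)}, ∃ v : G,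
      ((k : ℤ), v) ∈ Λ.1.1 := by
    intro Λ
    have : (k : ℤ) ∈ Λ.1.1.map (AddMonoidHom.fst ℤ G) := by
      rw [hmap]; exact AddSubgroup.mem_zmultiples _
    obtain ⟨⟨x, v⟩, hx, rfl⟩ := this
    exact ⟨v, hx⟩
  choose v hv using hex
  -- `(k, v)` together with `Λ'` determines the subgroup.
  have hle : ∀ Λ₁ Λ₂, (v Λ₁ : G ⧸ Λ') = v Λ₂ → Λ₁.1.1 ≤ Λ₂.1.1 := by
    rintro Λ₁ Λ₂ h ⟨x, g⟩ hx
    have hk : x ∈ Λ₁.1.1.map (AddMonoidHom.fst ℤ G) := ⟨_, hx, rfl⟩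
    rw [hmap, AddSubgroup.mem_zmultiples_iff] at hk
    obtain ⟨t, rfl⟩ := hk
    have h1 := Λ₁.1.1.sub_mem hx (Λ₁.1.1.zsmul_mem (hv Λ₁) t)
    simp only [Prod.smul_mk, Prod.mk_sub_mk, sub_self] at h1
    rw [hcomap, ← hcomap Λ₂] at h1
    have h2 := QuotientAddGroup.eq.1 h.symm
    rw [← hcomap Λ₂] at h2
    have h3 := Λ₂.1.1.add_mem (Λ₂.1.1.zsmul_mem (Λ₂.1.1.add_mem (hv Λ₂) h2) t) h1
    simpa using h3
  have hbij : Function.Bijective fun Λ => (v Λ : G ⧸ Λ') := by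
    refine ⟨fun Λ₁ Λ₂ h => Subtype.ext (Subtype.ext (le_antisymm (hle _ _ h) (hle _ _ h.symm))), ?_⟩
    intro q
    obtain ⟨w, rfl⟩ := QuotientAddGroup.mk_surjective q
    -- The subgroup generated by `0 × Λ'` and `(k, w)`.
    let L : AddSubgroup (ℤ × G) :=
      { carrier := {z | ∃ t : ℤ, z.1 = t * k ∧ z.2 - t • w ∈ Λ'}
        zero_mem' := ⟨0, by simp, by simp⟩
        add_mem' := by
          rintro a b ⟨s, hs, hs'⟩ ⟨t, ht, ht'⟩
          refine ⟨s + t, by simp [hs, ht, add_mul], ?_⟩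
          have := Λ'.add_mem hs' ht'
          rw [Prod.snd_add, add_smul]
          convert this using 1
          abel
        neg_mem' := by
          rintro a ⟨s, hs, hs'⟩
          refine ⟨-s, by simp [hs], ?_⟩
          have := Λ'.neg_mem hs'
          rw [Prod.snd_neg, neg_smul]
          convert this using 1
          abel }
    have hL : ∀ z : ℤ × G, z ∈ L ↔ ∃ t : ℤ, z.1 = t * k ∧ z.2 - t • w ∈ Λ' := fun z => Iff.rfl
    have hk0 : (k : ℤ) ≠ 0 := by exact_mod_cast k.ne_zero
    have hLm : L.map (AddMonoidHom.fst ℤ G) = AddSubgroup.zmultiples (k : ℤ) := by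
      ext x
      rw [AddSubgroup.mem_zmultiples_iff]
      constructor
      · rintro ⟨z, ⟨t, ht, -⟩, rfl⟩
        exact ⟨t, by simp [ht]⟩
      · rintro ⟨t, rfl⟩
        exact ⟨(t • (k : ℤ), t • w), ⟨t, by simp, by simp⟩, rfl⟩
    have hLc : L.comap (AddMonoidHom.inr ℤ G) = Λ' := by
      ext g
      rw [AddSubgroup.mem_comap, hL]
      constructor
      · rintro ⟨t, ht, h⟩
        have : t = 0 := by simpa [hk0] using ht.symm
        simpa [this] using h
      · intro h
        exact ⟨0, by simp, by simpa using h⟩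
    have hi : L.index ≠ 0 := by
      rw [index_eq_mul, hLm, hLc, Int.index_zmultiples]
      exact mul_ne_zero (by simp) hΛ'
    have hs : shape ⟨L, hi⟩ = (k, ⟨Λ', hΛ'⟩) := by
      refine Prod.ext (PNat.eq ?_) (Subtype.ext hLc)
      change (L.map (AddMonoidHom.fst ℤ G)).index = k
      rw [hLm, Int.index_zmultiples]
      simp
    refine ⟨⟨⟨L, hi⟩, hs⟩, ?_⟩
    obtain ⟨t, ht, h⟩ := (hL _).1 (hv ⟨⟨L, hi⟩, hs⟩)
    have ht1 : t = 1 := by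
      have : (1 : ℤ) * k = t * k := by simpa using ht
      exact (mul_right_cancel₀ hk0 this).symm
    subst ht1
    refine (QuotientAddGroup.eq.2 ?_).symm
    simpa [neg_add_eq_sub] using h
  rw [ENat.card_congr (Equiv.ofBijective _ hbij)]
  have : Finite (G ⧸ Λ') := (AddSubgroup.fintypeOfIndexNeZero hΛ').finite
  rw [ENat.card_eq_coe_natCard]
  rfl

/-- Summation over the fibres of `shape`. -/
lemma tsum_finIdx_prod {G : Type*} [AddCommGroup G] (φ : ℕ → ℝ≥0∞) :
    ∑' Λ : FinIdx (ℤ × G), φ Λ.1.index =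
      ∑' (k : ℕ+) (Λ : FinIdx G), (Λ.1.index : ℝ≥0∞) * φ (k * Λ.1.index) := by
  rw [← (Equiv.sigmaFiberEquiv (shape (G := G))).tsum_eq, ENNReal.tsum_sigma', ← ENNReal.tsum_prod]
  refine tsum_congr fun p => ?_
  calc _ = ∑' _ : {Λ : FinIdx (ℤ × G) // shape Λ = p}, φ (p.1 * p.2.1.index) :=
        tsum_congr fun Λ => congrArg φ (index_eq_of_shape Λ.2)
    _ = _ := by rw [ENNReal.tsum_const, card_shape_fiber]; simp

lemma tsum_finIdx_congr {G H : Type*} [AddGroup G] [AddGroup H] (e : G ≃+ H) (φ : ℕ → ℝ≥0∞) :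
    ∑' Λ : FinIdx G, φ Λ.1.index = ∑' Λ : FinIdx H, φ Λ.1.index := by
  have hidx : ∀ Λ : AddSubgroup G, (e.mapAddSubgroup Λ).index = Λ.index :=
    fun Λ => AddSubgroup.index_map_equiv Λ e
  let E : FinIdx G ≃ FinIdx H :=
    e.mapAddSubgroup.toEquiv.subtypeEquiv fun Λ => by
      exact (hidx Λ).symm ▸ Iff.rfl
  rw [← E.tsum_eq]
  exact tsum_congr fun Λ => congrArg φ (hidx Λ.1).symm

lemma tsum_finIdx_succ (d : ℕ) (φ : ℕ → ℝ≥0∞) :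
    ∑' Λ : FinIdx (Fin (d + 1) → ℤ), φ Λ.1.index =
      ∑' (k : ℕ+) (Λ : FinIdx (Fin d → ℤ)), (Λ.1.index : ℝ≥0∞) * φ (k * Λ.1.index) := by
  rw [← tsum_finIdx_prod]
  exact tsum_finIdx_congr (Fin.consLinearEquiv ℤ fun _ => ℤ).symm.toAddEquiv φ

lemma tsum_finIdx_zero (φ : ℕ → ℝ≥0∞) :
    ∑' Λ : FinIdx (Fin 0 → ℤ), φ Λ.1.index = φ 1 := by
  have h : ∀ Λ : AddSubgroup (Fin 0 → ℤ), Λ = ⊤ := fun Λ => Subsingleton.elim _ _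
  have hu : ∀ Λ : FinIdx (Fin 0 → ℤ), Λ = ⟨⊤, by simp⟩ := fun Λ => Subtype.ext (h _)
  rw [tsum_eq_single ⟨⊤, by simp⟩ fun Λ hΛ => (hΛ (hu Λ)).elim]
  simp

/-! ### Moments of the index -/

/-- The weight `n ^ j` cut off at `n ≤ T`. -/
noncomputable def wt (j : ℕ) (T : ℝ) (n : ℕ) : ℝ≥0∞ := if (n : ℝ) ≤ T then (n : ℝ≥0∞) ^ j else 0

/-- The sum of `[ℤ^d : Λ] ^ j` over the subgroups `Λ` of finite index at most `T`. -/
noncomputable def momentSum (d j : ℕ) (T : ℝ) : ℝ≥0∞ :=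
  ∑' Λ : FinIdx (Fin d → ℤ), wt j T Λ.1.index

lemma momentSum_succ (d j : ℕ) (T : ℝ) :
    momentSum (d + 1) j T = ∑' k : ℕ+, (k : ℝ≥0∞) ^ j * momentSum d (j + 1) (T / k) := by
  rw [momentSum, tsum_finIdx_succ]
  refine tsum_congr fun k => ?_
  rw [momentSum, ← ENNReal.tsum_mul_left]
  refine tsum_congr fun Λ => ?_
  have hk : (0 : ℝ) < k := by exact_mod_cast k.pos
  simp only [wt, le_div_iff₀ hk, Nat.cast_mul, mul_comm (k : ℝ)]
  split_ifs
  · ring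
  · simp

lemma momentSum_one (j : ℕ) (T : ℝ) :
    momentSum 1 j T = ∑ k ∈ Finset.Icc 1 ⌊T⌋₊, (k : ℝ≥0∞) ^ j := by
  rw [momentSum, tsum_finIdx_succ]
  refine (tsum_congr fun k : ℕ+ =>
    tsum_finIdx_zero fun n => (n : ℝ≥0∞) * wt j T (k * n)).trans ?_
  simp only [Nat.cast_one, one_mul, mul_one]
  have h : ∀ n : ℕ, n ∉ Finset.Icc 1 ⌊T⌋₊ → n ≠ 0 → wt j T n = 0 := by
    intro n hn h0
    rw [wt, if_neg]
    intro h
    exact hn (Finset.mem_Icc.2 ⟨Nat.one_le_iff_ne_zero.2 h0, Nat.le_floor h⟩)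
  rw [tsum_pnat_eq_tsum_succ (f := wt j T),
    tsum_eq_sum (s := Finset.range ⌊T⌋₊) (fun n hn => h _ (by simpa using hn) (by simp))]
  rw [Finset.sum_bij (fun n _ => n + 1) (t := Finset.Icc 1 ⌊T⌋₊) (g := fun k => (k : ℝ≥0∞) ^ j)]
  · intro n hn
    simp only [Finset.mem_range] at hn
    exact Finset.mem_Icc.2 ⟨by omega, by omega⟩
  · intro a _ b _ hab
    omega
  · intro n hn
    rw [Finset.mem_Icc] at hn
    exact ⟨n - 1, by simp only [Finset.mem_range]; omega, by omega⟩
  · intro n hn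
    rw [Finset.mem_range, ← Nat.add_one_le_iff] at hn
    rw [wt, if_pos ((Nat.le_floor_iff' (by simp)).1 hn)]

/-! ### Power sums: the case of `ℤ` -/

lemma pow_succ_le (j : ℕ) (x : ℝ) (hx : 0 ≤ x) :
    (x + 1) ^ (j + 1) ≤ x ^ (j + 1) + (j + 1) * (x + 1) ^ j ∧
      x ^ (j + 1) + (j + 1) * x ^ j ≤ (x + 1) ^ (j + 1) := by
  induction j with
  | zero => simp
  | succ j ih =>
    obtain ⟨h1, h2⟩ := ih
    have h3 : x ^ (j + 1) ≤ (x + 1) ^ (j + 1) := by gcongr; linarith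
    have h4 : 0 ≤ x ^ j := by positivity
    push_cast
    constructor
    · have := mul_le_mul_of_nonneg_left h1 (by linarith : 0 ≤ x + 1)
      rw [pow_succ (x + 1) (j + 1), pow_succ x (j + 1)]
      ring_nf at *
      nlinarith
    · have := mul_le_mul_of_nonneg_left h2 (by linarith : 0 ≤ x + 1)
      ring_nf at *
      nlinarith

/-- Both bounds come from telescoping `pow_succ_le`. -/
lemma sum_pow_bounds (j N : ℕ) :
    (N : ℝ) ^ (j + 1) ≤ (j + 1) * ∑ k ∈ Finset.Icc 1 N, (k : ℝ) ^ j ∧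
      (j + 1) * ∑ k ∈ Finset.Icc 1 N, (k : ℝ) ^ j ≤ ((N : ℝ) + 1) ^ (j + 1) := by
  induction N with
  | zero => simp
  | succ N ih =>
    rw [Finset.sum_Icc_succ_top (by omega), mul_add]
    have h1 := (pow_succ_le j N (by positivity)).1
    have h2 := (pow_succ_le j (N + 1) (by positivity)).2
    push_cast
    constructor <;> linarith [ih.1, ih.2]

/-- The asymptotic `∑ [ℤ^d : Λ] ^ j ∼ c T ^ (d + j) / (d + j)` over index at most `T`, for all `j`,
with a uniform upper bound to be used as a majorant. -/
def HasMoments (d : ℕ) (c : ℝ) : Prop :=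
  ∀ j : ℕ, (∃ C : ℝ, 0 ≤ C ∧ ∀ T : ℝ, 0 < T → momentSum d j T ≤ ENNReal.ofReal (C * T ^ (d + j))) ∧
    Tendsto (fun T : ℝ => (momentSum d j T).toReal / T ^ (d + j)) atTop (𝓝 (c / (d + j : ℝ)))

lemma hasMoments_one : HasMoments 1 1 := by
  intro j
  have hreal : ∀ T, momentSum 1 j T = ENNReal.ofReal (∑ k ∈ Finset.Icc 1 ⌊T⌋₊, (k : ℝ) ^ j) := by
    intro T
    rw [momentSum_one, ENNReal.ofReal_sum_of_nonneg fun _ _ => by positivity]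
    refine Finset.sum_congr rfl fun k _ => ?_
    rw [ENNReal.ofReal_pow (by positivity), ENNReal.ofReal_natCast]
  refine ⟨⟨1, zero_le_one, fun T hT => ?_⟩, ?_⟩
  · rw [hreal]
    refine ENNReal.ofReal_le_ofReal ?_
    have hfl : (⌊T⌋₊ : ℝ) ≤ T := Nat.floor_le hT.le
    calc _ ≤ ∑ k ∈ Finset.Icc 1 ⌊T⌋₊, T ^ j := by
          refine Finset.sum_le_sum fun k hk => ?_
          have : (k : ℝ) ≤ ⌊T⌋₊ := by exact_mod_cast (Finset.mem_Icc.1 hk).2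
          gcongr
          linarith
      _ = ⌊T⌋₊ * T ^ j := by simp
      _ ≤ T * T ^ j := by gcongr
      _ = _ := by ring
  · have hlim : ∀ a : ℝ, Tendsto (fun T : ℝ => (1 + a * T⁻¹) ^ (j + 1) / (j + 1)) atTop
        (𝓝 (1 / ((1 : ℕ) + j : ℝ))) := by
      intro a
      have := ((((tendsto_inv_atTop_zero (𝕜 := ℝ)).const_mul a).const_add 1).pow (j + 1)).div_const
        ((j : ℝ) + 1)
      simpa [add_comm] using this
    refine tendsto_of_tendsto_of_tendsto_of_le_of_le' (hlim (-1)) (hlim 1) ?_ ?_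
    · filter_upwards [eventually_ge_atTop 1] with T hT
      have hT0 : 0 < T := by linarith
      rw [hreal, ENNReal.toReal_ofReal (by positivity)]
      have h1 := (sum_pow_bounds j ⌊T⌋₊).1
      have h2 : (T - 1) ^ (j + 1) ≤ (⌊T⌋₊ : ℝ) ^ (j + 1) := by
        have := Nat.sub_one_lt_floor T
        gcongr
      have h3 : 1 + -1 * T⁻¹ = (T - 1) / T := by field_simp; ring
      rw [h3, div_pow, div_div, add_comm 1 j, mul_comm, ← div_div]
      gcongr
      rw [div_le_iff₀ (by positivity)]
      linarith
    · filter_upwards [eventually_ge_atTop 1] with T hT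
      have hT0 : 0 < T := by linarith
      rw [hreal, ENNReal.toReal_ofReal (by positivity)]
      have h1 := (sum_pow_bounds j ⌊T⌋₊).2
      have h2 : ((⌊T⌋₊ : ℝ) + 1) ^ (j + 1) ≤ (T + 1) ^ (j + 1) := by
        have := Nat.floor_le hT0.le
        gcongr
      have h3 : 1 + 1 * T⁻¹ = (T + 1) / T := by field_simp
      rw [h3, div_pow, div_div, add_comm 1 j, mul_comm (T ^ _), ← div_div]
      gcongr
      rw [le_div_iff₀ (by positivity)]
      linarith

/-! ### Induction on the rank -/

lemma summable_pnat_inv_pow {n : ℕ} (hn : 1 < n) : Summable fun k : ℕ+ => ((k : ℝ) ^ n)⁻¹ :=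
  (Real.summable_nat_pow_inv.2 hn).comp_injective PNat.coe_injective

/-- The induction step, by dominated convergence in `momentSum_succ`; `1 ≤ d` is what makes
`∑ k ^ (-(d + 1))` converge. -/
lemma HasMoments.succ {d : ℕ} (hd : 1 ≤ d) {c : ℝ} (h : HasMoments d c) :
    HasMoments (d + 1) (c * ∑' k : ℕ+, ((k : ℝ) ^ (d + 1))⁻¹) := by
  intro j
  obtain ⟨⟨C, hC, hb⟩, hlim⟩ := h (j + 1)
  have hsum := summable_pnat_inv_pow (n := d + 1) (by omega)
  have hkpos : ∀ k : ℕ+, (0 : ℝ) < k := fun k => by exact_mod_cast k.pos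
  have hterm : ∀ T : ℝ, 0 < T → ∀ k : ℕ+, (k : ℝ≥0∞) ^ j * momentSum d (j + 1) (T / k) ≤
      ENNReal.ofReal (C * T ^ (d + 1 + j) * ((k : ℝ) ^ (d + 1))⁻¹) := by
    intro T hT k
    have hk := hkpos k
    calc _ ≤ ENNReal.ofReal ((k : ℝ) ^ j) * ENNReal.ofReal (C * (T / k) ^ (d + (j + 1))) := by
          rw [ENNReal.ofReal_pow hk.le, ENNReal.ofReal_natCast]
          gcongr
          exact hb _ (by positivity)
      _ = _ := by
          rw [← ENNReal.ofReal_mul (by positivity)]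
          congr 1
          rw [div_pow]
          field_simp
          ring
  refine ⟨⟨C * ∑' k : ℕ+, ((k : ℝ) ^ (d + 1))⁻¹,
    mul_nonneg hC (tsum_nonneg fun k => by positivity), fun T hT => ?_⟩, ?_⟩
  · rw [momentSum_succ]
    refine (ENNReal.tsum_le_tsum (hterm T hT)).trans_eq ?_
    rw [← ENNReal.ofReal_tsum_of_nonneg (fun k => by positivity) (hsum.mul_left _), tsum_mul_left]
    congr 1
    ring
  · have hL : c * (∑' k : ℕ+, ((k : ℝ) ^ (d + 1))⁻¹) / ((d + 1 : ℕ) + j : ℝ) =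
        ∑' k : ℕ+, ((k : ℝ) ^ (d + 1))⁻¹ * (c / (d + (j + 1 : ℕ) : ℝ)) := by
      rw [tsum_mul_right]
      push_cast
      ring
    rw [hL]
    have hD : Tendsto (fun T : ℝ => ∑' k : ℕ+,
        ((k : ℝ≥0∞) ^ j * momentSum d (j + 1) (T / k)).toReal / T ^ (d + 1 + j)) atTop
        (𝓝 (∑' k : ℕ+, ((k : ℝ) ^ (d + 1))⁻¹ * (c / (d + (j + 1 : ℕ) : ℝ)))) := by
      refine tendsto_tsum_of_dominated_convergence
        (bound := fun k : ℕ+ => C * ((k : ℝ) ^ (d + 1))⁻¹) (hsum.mul_left C) (fun k => ?_) ?_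
      · have hk := hkpos k
        have h1 : Tendsto (fun T : ℝ => T / k) atTop atTop := tendsto_id.atTop_div_const hk
        refine ((hlim.comp h1).const_mul ((k : ℝ) ^ (d + 1))⁻¹).congr' ?_
        filter_upwards [eventually_gt_atTop 0] with T hT
        simp only [Function.comp, ENNReal.toReal_mul, ENNReal.toReal_pow, ENNReal.toReal_natCast,
          div_pow]
        field_simp
        ring
      · filter_upwards [eventually_gt_atTop 0] with T hT k
        have hk := hkpos k
        rw [Real.norm_of_nonneg (by positivity), div_le_iff₀ (by positivity)]
        refine (ENNReal.toReal_le_of_le_ofReal (by positivity) (hterm T hT k)).trans_eq ?_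
        ring
    refine hD.congr' ?_
    filter_upwards [eventually_gt_atTop 0] with T hT
    rw [momentSum_succ, ENNReal.tsum_toReal_eq, tsum_div_const]
    exact fun k => ne_top_of_le_ne_top ENNReal.ofReal_ne_top (hterm T hT k)

lemma hasMoments (d : ℕ) (hd : 1 ≤ d) :
    HasMoments d (∏ n ∈ Finset.Icc 2 d, ∑' k : ℕ+, ((k : ℝ) ^ n)⁻¹) := by
  induction d, hd using Nat.le_induction with
  | base => simpa using hasMoments_one
  | succ d hd ih =>
    rw [Finset.prod_Icc_succ_top (by omega)]
    exact ih.succ hd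

lemma riemannZeta_eq_tsum_pnat {n : ℕ} (hn : 1 < n) :
    riemannZeta n = ((∑' k : ℕ+, ((k : ℝ) ^ n)⁻¹ : ℝ) : ℂ) := by
  rw [zeta_nat_eq_tsum_of_gt_one hn, tsum_pnat_eq_tsum_succ (f := fun k : ℕ => ((k : ℝ) ^ n)⁻¹)]
  have h := (Real.summable_nat_pow_inv.2 hn).tsum_eq_zero_add
  rw [Nat.cast_zero, zero_pow (by omega), inv_zero, zero_add] at h
  rw [← h, Complex.ofReal_tsum]
  simp

/-- The identity holds irrespective of finiteness: for an infinite set both sides are `0`. -/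
lemma card_eq_momentSum (d : ℕ) (T : ℝ) :
    (Nat.card {Λ : AddSubgroup (Fin d → ℤ) // Λ.index ≠ 0 ∧ (Λ.index : ℝ) ≤ T} : ℝ) =
      (momentSum d 0 T).toReal := by
  have : momentSum d 0 T = ∑' Λ : {Λ : FinIdx (Fin d → ℤ) | (Λ.1.index : ℝ) ≤ T}, (1 : ℝ≥0∞) := by
    rw [tsum_subtype {Λ : FinIdx (Fin d → ℤ) | (Λ.1.index : ℝ) ≤ T} fun _ => (1 : ℝ≥0∞), momentSum]
    refine tsum_congr fun Λ => ?_
    simp [wt, Set.indicator_apply]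
  rw [this, ENNReal.tsum_const, mul_one,
    Nat.card_congr (Equiv.subtypeSubtypeEquivSubtypeInter (fun Λ : AddSubgroup (Fin d → ℤ) =>
      Λ.index ≠ 0) fun Λ => (Λ.index : ℝ) ≤ T).symm]
  change (Nat.card {Λ : FinIdx (Fin d → ℤ) | (Λ.1.index : ℝ) ≤ T} : ℝ) = _
  rcases finite_or_infinite {Λ : FinIdx (Fin d → ℤ) | (Λ.1.index : ℝ) ≤ T} with hf | hf
  · rw [ENat.card_eq_coe_natCard, ENat.toENNReal_coe, ENNReal.toReal_natCast]
  · rw [ENat.card_eq_top_of_infinite, Nat.card_eq_zero_of_infinite]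
    simp

/-- The number `M(T)` of finite-index subgroups of `ℤ^d` of index at most `T` satisfies
`M(T)/T^d → (∏_{n=2}^d ζ(n))/d` as `T → ∞`. -/
theorem sublattice_count_asymptotic (d : ℕ) (hd : 1 ≤ d) :
    Tendsto (fun T : ℝ =>
        (((Nat.card {Λ : AddSubgroup (Fin d → ℤ) //
            Λ.index ≠ 0 ∧ (Λ.index : ℝ) ≤ T} : ℝ) / T ^ d : ℝ) : ℂ))
      atTop
      (𝓝 ((∏ n ∈ Finset.Icc 2 d, riemannZeta (n : ℂ)) / (d : ℂ))) := by
  have hz : (∏ n ∈ Finset.Icc 2 d, riemannZeta (n : ℂ)) / (d : ℂ) =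
      (((∏ n ∈ Finset.Icc 2 d, ∑' k : ℕ+, ((k : ℝ) ^ n)⁻¹) / d : ℝ) : ℂ) := by
    rw [Complex.ofReal_div, Complex.ofReal_prod, Complex.ofReal_natCast]
    congr 1
    exact Finset.prod_congr rfl fun n hn =>
      riemannZeta_eq_tsum_pnat (Finset.mem_Icc.1 hn).1
  rw [hz]
  refine (Complex.continuous_ofReal.tendsto _).comp ?_
  simpa [card_eq_momentSum] using (hasMoments d hd 0).2
end

section
/- Let f ∈ ℤ[X] be monic with f = g₁⋯g_k, where g₁,…,g_k ∈ ℤ[X] are irreducible, monic and pairwise distinct, and let Z_f = ℤ[X]/(f). Then there exists a real constant c > 0 such that Σ_{n≤N} a_n(Z_f) ∼ c·N·(log N)^{k-1} as N → ∞, i.e. lim_{N→∞} (Σ_{n≤N} a_n(Z_f)) / (N (log N)^{k-1}) = c. -/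
/-!
Write `a_n(A)` for the number of ideals of index `n` in `A`, and say that an arithmetic function has
growth `(j, c)` if its partial sums are asymptotic to `c * N * (1 + log N) ^ j`.

For a number field `K` the partial sums of `a_n(𝓞 K)` are asymptotic to a positive constant times
`N` (class number formula). The claim is carried from there to `ℤ[X]/(f)`, which embeds with finite
index in a product of `k` rings of integers, by comparing Euler factors without any use of Dirichlet
series:

* `n ↦ a_n(A)` is multiplicative by the Chinese remainder theorem, hence it is the Dirichlet
  convolution of its part supported on the `m`-smooth numbers (all prime factors divide `m`) and its
  part supported on the numbers coprime to `m` (`smoothPart_mul_copPart`).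
* If `R ⊆ O` and `m O ⊆ R`, then `R` and `O` have the same number of ideals of each index coprime
  to `m` (`cnt_eq_of_coprime`), while at the primes dividing `m` only the convergence of
  `∑ 1 / |A/I|` over ideals of `m`-smooth index is needed. It passes from `O` to `R` because
  `I ↦ I O` has fibres of bounded size and increases the index at most by the factor
  `[O : R]` (`LocSum.transfer`).
* Convolving a function of growth `(j, c)` with a nonnegative `w` such that `∑ w n / n` converges
  gives growth `(j, c * ∑ w n / n)` (`HasGrowth.conv_summable`); convolving it with a function of
  growth `(0, d)` raises `j` by one (`HasGrowth.conv`). As `a(A × B) = a(A) * a(B)` for Dirichlet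
  convolution (`cnt_prod`), each further irreducible factor contributes one logarithm.

The property `Good A j` packages local summability at `m` and growth of exponent `j` of the part
coprime to `m`, for all multiples `m` of some `m₀`. It holds for `𝓞 K` with `j = 0`
(`good_ringOfIntegers`): removing the finitely many primes above `m` by a sieve multiplies the
density of ideals by factors `1 - 1 / N(P)`. It is stable under products (`Good.prod`) and passage to
subrings of finite index (`Good.transfer`), and it gives the asymptotics of the full count
(`Good.hasGrowth`).
-/

open Filter Topology

namespace IdealCount

/-! ### Growth of summatory functions and Dirichlet convolutions -/

open ArithmeticFunction

/-- The summatory function `∑_{1 ≤ n ≤ N} a n`. -/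
noncomputable def summ (a : ArithmeticFunction ℝ) (N : ℕ) : ℝ := ∑ n ∈ Finset.Ioc 0 N, a n

/-- `1 + log N`; it is at least `1` for every `N`, including `N = 0` and `N = 1`. -/
noncomputable def ell (N : ℕ) : ℝ := 1 + Real.log N

/-- `∑_{n ≤ N} a n ∼ c N (1 + log N)^j`. -/
def HasGrowth (a : ArithmeticFunction ℝ) (j : ℕ) (c : ℝ) : Prop :=
  Tendsto (fun N : ℕ => summ a N / (N * ell N ^ j)) atTop (𝓝 c)

lemma one_le_ell (N : ℕ) : 1 ≤ ell N := by
  have := Real.log_natCast_nonneg N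
  unfold ell; linarith

lemma ell_pos (N : ℕ) : 0 < ell N := lt_of_lt_of_le one_pos (one_le_ell N)

lemma ell_mono {M N : ℕ} (h : M ≤ N) : ell M ≤ ell N := by
  unfold ell
  rcases Nat.eq_zero_or_pos M with rfl | hM
  · simpa using Real.log_natCast_nonneg N
  · have : (M : ℝ) ≤ N := by exact_mod_cast h
    have : Real.log M ≤ Real.log N := Real.log_le_log (by exact_mod_cast hM) this
    linarith

lemma tendsto_ell : Tendsto ell atTop atTop :=
  tendsto_atTop_add_const_left _ _ (Real.tendsto_log_atTop.comp tendsto_natCast_atTop_atTop)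

@[simp] lemma summ_zero (a : ArithmeticFunction ℝ) : summ a 0 = 0 := by simp [summ]

lemma summ_succ (a : ArithmeticFunction ℝ) (N : ℕ) : summ a (N + 1) = summ a N + a (N + 1) := by
  simp [summ, Finset.sum_Ioc_succ_top]

lemma summ_nonneg {a : ArithmeticFunction ℝ} (ha : ∀ n, 0 ≤ a n) (N : ℕ) : 0 ≤ summ a N :=
  Finset.sum_nonneg fun n _ => ha n

lemma summ_mul (a b : ArithmeticFunction ℝ) (N : ℕ) :
    summ (a * b) N = ∑ n ∈ Finset.Ioc 0 N, a n * summ b (N / n) :=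
  sum_Ioc_mul_eq_sum_sum a b N

lemma HasGrowth.exists_bound {a : ArithmeticFunction ℝ} {j : ℕ} {c : ℝ} (h : HasGrowth a j c) :
    ∃ C : ℝ, 0 ≤ C ∧ ∀ N : ℕ, summ a N ≤ C * (N * ell N ^ j) := by
  obtain ⟨C, hC⟩ := h.bddAbove_range
  refine ⟨max C 0, le_max_right _ _, fun N => ?_⟩
  rcases Nat.eq_zero_or_pos N with rfl | hN
  · simp
  · have hpos : (0 : ℝ) < N * ell N ^ j := by
      have := ell_pos N
      positivity
    have := hC ⟨N, rfl⟩
    simp only at this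
    rw [div_le_iff₀ hpos] at this
    exact this.trans (mul_le_mul_of_nonneg_right (le_max_left _ _) hpos.le)

/-- Rescaling the argument by a bounded factor does not change `1 + log N` asymptotically. -/
lemma tendsto_ell_ratio {M : ℕ → ℕ} {r : ℝ} (hr : 0 < r)
    (h : Tendsto (fun N : ℕ => (M N : ℝ) / N) atTop (𝓝 r)) :
    Tendsto (fun N : ℕ => ell (M N) / ell N) atTop (𝓝 1) := by
  have h1 : Tendsto (fun N : ℕ => 1 + Real.log ((M N : ℝ) / N) / ell N) atTop (𝓝 (1 + 0)) :=
    tendsto_const_nhds.add ((h.log hr.ne').div_atTop tendsto_ell)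
  rw [add_zero] at h1
  refine h1.congr' ?_
  filter_upwards [h.eventually (lt_mem_nhds hr), eventually_gt_atTop 0] with N hN hN0
  have hN' : (N : ℝ) ≠ 0 := by positivity
  have hM : (M N : ℝ) ≠ 0 := by
    intro h0; simp [h0] at hN
  have := (ell_pos N).ne'
  rw [Real.log_div hM hN']
  field_simp
  unfold ell; ring

lemma tendsto_div_ratio {d : ℕ} (hd : 0 < d) :
    Tendsto (fun N : ℕ => ((N / d : ℕ) : ℝ) / N) atTop (𝓝 (1 / d)) := by
  have := (tendsto_nat_floor_mul_div_atTop (R := ℝ) (a := 1 / d) (by positivity)).comp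
    (tendsto_natCast_atTop_atTop (R := ℝ))
  refine this.congr fun N => ?_
  simp only [Function.comp]
  congr 2
  rw [one_div, mul_comm, ← div_eq_mul_inv, Nat.floor_div_natCast, Nat.floor_natCast]

lemma tendsto_succ_ratio :
    Tendsto (fun N : ℕ => ((N + 1 : ℕ) : ℝ) / N) atTop (𝓝 1) := by
  have := (tendsto_const_nhds (x := (1 : ℝ))).add (tendsto_one_div_atTop_nhds_zero_nat (𝕜 := ℝ))
  rw [add_zero] at this
  refine this.congr' ?_
  filter_upwards [eventually_gt_atTop 0] with N hN
  have : (N : ℝ) ≠ 0 := by positivity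
  push_cast; field_simp

/-- Growth along `N ↦ ⌊N / d⌋`, normalised by the growth scale at `N`. -/
lemma HasGrowth.comp_div {t : ArithmeticFunction ℝ} {j : ℕ} {c : ℝ} (h : HasGrowth t j c)
    {d : ℕ} (hd : 0 < d) :
    Tendsto (fun N : ℕ => summ t (N / d) / (N * ell N ^ j)) atTop (𝓝 (c / d)) := by
  have hr := tendsto_div_ratio hd
  have h1 := ((h.comp (Nat.tendsto_div_const_atTop hd.ne')).mul hr).mul
    ((tendsto_ell_ratio (by positivity) hr).pow j)
  have e : c * (1 / (d : ℝ)) * 1 ^ j = c / d := by simp [div_eq_mul_inv]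
  rw [e] at h1
  refine h1.congr' ?_
  filter_upwards [eventually_ge_atTop d] with N hN
  have hM : 0 < N / d := Nat.div_pos hN hd
  have hM' : ((N / d : ℕ) : ℝ) ≠ 0 := by positivity
  have hN' : (N : ℝ) ≠ 0 := by
    have : 0 < N := hd.trans_le hN
    positivity
  have h1 := (ell_pos N).ne'
  have h2 := (ell_pos (N / d)).ne'
  simp only [Function.comp, div_pow]
  field_simp

/-- Convolution with a nonnegative `w` such that `∑ w n / n` converges only changes the constant:
dominated convergence in `∑_d w d · T(N / d) / (N (1 + log N)^j)`. -/
lemma HasGrowth.conv_summable {w t : ArithmeticFunction ℝ} {j : ℕ} {c : ℝ} (h : HasGrowth t j c)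
    (ht : ∀ n, 0 ≤ t n) (hw : ∀ n, 0 ≤ w n) (hs : Summable fun n : ℕ => w n / n) :
    HasGrowth (w * t) j (∑' n : ℕ, w n * (c / n)) := by
  obtain ⟨C, hC0, hC⟩ := h.exists_bound
  have key := tendsto_tsum_of_dominated_convergence (𝓕 := atTop)
    (f := fun N d : ℕ => w d * (summ t (N / d) / (N * ell N ^ j)))
    (g := fun d : ℕ => w d * (c / d)) (bound := fun d : ℕ => C * (w d / d)) (hs.mul_left C)
    (fun d => by
      rcases Nat.eq_zero_or_pos d with rfl | hd
      · simp
      · exact (h.comp_div hd).const_mul _)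
    (by
      filter_upwards [eventually_gt_atTop 0] with N hN d
      have hpos : (0 : ℝ) < N * ell N ^ j := by
        have := ell_pos N
        positivity
      rw [Real.norm_of_nonneg (mul_nonneg (hw d) (div_nonneg (summ_nonneg ht _) hpos.le))]
      rcases Nat.eq_zero_or_pos d with rfl | hd
      · simp
      have hd' : (0 : ℝ) < d := by positivity
      have : summ t (N / d) / (N * ell N ^ j) ≤ C / d := by
        rw [div_le_div_iff₀ hpos hd']
        calc summ t (N / d) * d ≤ C * ((N / d : ℕ) * ell (N / d) ^ j) * d := by
              gcongr; exact hC _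
          _ ≤ C * ((N / d : ℕ) * ell N ^ j) * d := by
              have := ell_mono (Nat.div_le_self N d)
              have := ell_pos (N / d)
              gcongr
          _ = C * (((N / d : ℕ) * (d : ℝ)) * ell N ^ j) := by ring
          _ ≤ C * (N * ell N ^ j) := by
              have := ell_pos N
              have : ((N / d : ℕ) : ℝ) * d ≤ N := by exact_mod_cast Nat.div_mul_le_self N d
              gcongr
      calc w d * (summ t (N / d) / (N * ell N ^ j)) ≤ w d * (C / d) := by
            have := hw d
            gcongr
        _ = C * (w d / d) := by ring)
  refine key.congr fun N => ?_
  rw [summ_mul, Finset.sum_div, tsum_eq_sum (s := Finset.Ioc 0 N)]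
  · exact Finset.sum_congr rfl fun d _ => by ring
  · intro d hd
    rcases Nat.eq_zero_or_pos d with rfl | hd0
    · simp
    · have : N / d = 0 := Nat.div_eq_of_lt (by simp [hd0] at hd; omega)
      simp [this]

lemma tendsto_mul_ell_sub :
    Tendsto (fun N : ℕ => (N : ℝ) * (ell (N + 1) - ell N)) atTop (𝓝 1) := by
  refine ((Real.tendsto_mul_log_one_add_div_atTop 1).comp
    (tendsto_natCast_atTop_atTop (R := ℝ))).congr' ?_
  filter_upwards [eventually_gt_atTop 0] with N hN
  have hN' : (0 : ℝ) < N := by positivity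
  simp only [Function.comp, ell]
  rw [show (1 : ℝ) + 1 / N = ((N + 1 : ℕ) : ℝ) / N by push_cast; field_simp,
    Real.log_div (by positivity) hN'.ne']
  ring

lemma tendsto_ell_pow_sub (j : ℕ) :
    Tendsto (fun N : ℕ => (ell (N + 1) ^ (j + 1) - ell N ^ (j + 1)) * N / ell N ^ j) atTop
      (𝓝 (j + 1)) := by
  have hr : Tendsto (fun N : ℕ => ell (N + 1) / ell N) atTop (𝓝 1) :=
    tendsto_ell_ratio one_pos tendsto_succ_ratio
  have h := tendsto_mul_ell_sub.mul
    (tendsto_finsetSum (Finset.range (j + 1)) fun i _ => hr.pow i)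
  have e : (1 : ℝ) * ∑ i ∈ Finset.range (j + 1), 1 ^ i = j + 1 := by simp
  rw [e] at h
  refine h.congr fun N => ?_
  have hN := (ell_pos N).ne'
  have hg := geom_sum_mul (ell (N + 1) / ell N) (j + 1)
  set G := ∑ i ∈ Finset.range (j + 1), (ell (N + 1) / ell N) ^ i
  rw [div_pow] at hg
  field_simp at hg ⊢
  rw [pow_succ] at hg ⊢
  have h2 : G * (ell (N+1) - ell N) * ell N ^ j * ell N =
    (ell (N + 1) ^ (j + 1) - ell N ^ (j + 1)) * ell N := by
    rw [pow_succ, pow_succ]; linear_combination hg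
  have h3 := mul_right_cancel₀ hN h2
  rw [pow_succ, pow_succ] at h3
  linear_combination (N : ℝ) * h3

lemma sum_div_eq (b : ArithmeticFunction ℝ) (N : ℕ) :
    ∑ n ∈ Finset.Ioc 0 N, b n / n =
      summ b N / (N + 1) + ∑ i ∈ Finset.range N, summ b (i + 1) / ((i + 1) * (i + 2)) := by
  induction N with
  | zero => simp
  | succ N ih =>
    rw [Finset.sum_Ioc_succ_top (Nat.zero_le N), ih, Finset.sum_range_succ, summ_succ]
    push_cast
    field_simp
    ring

/-- Abel summation: `∑_{n ≤ N} b n / n ∼ β/(j+1) · (1 + log N)^(j+1)`. -/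
lemma HasGrowth.sum_div {b : ArithmeticFunction ℝ} {j : ℕ} {β : ℝ} (h : HasGrowth b j β) :
    Tendsto (fun N : ℕ => (∑ n ∈ Finset.Ioc 0 N, b n / n) / ell N ^ (j + 1)) atTop
      (𝓝 (β / (j + 1))) := by
  set v : ℕ → ℝ := fun i => ell (i + 2) ^ (j + 1) - ell (i + 1) ^ (j + 1) with hv
  set u : ℕ → ℝ := fun i => summ b (i + 1) / ((i + 1) * (i + 2)) with hu
  have hvsum : ∀ N, ∑ i ∈ Finset.range N, v i = ell (N + 1) ^ (j + 1) - 1 := by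
    intro N
    rw [Finset.sum_range_sub (fun i => ell (i + 1) ^ (j + 1))]
    simp [ell]
  have hvpos : ∀ i, 0 ≤ v i := fun i =>
    sub_nonneg.2 (pow_le_pow_left₀ (ell_pos _).le (ell_mono (Nat.le_succ _)) _)
  have hsucc : Tendsto (fun N : ℕ => N + 1) atTop atTop := tendsto_add_atTop_nat 1
  have hvtop : Tendsto (fun N => ∑ i ∈ Finset.range N, v i) atTop atTop := by
    simp_rw [hvsum]
    exact tendsto_atTop_add_const_right _ _
      ((tendsto_pow_atTop (Nat.succ_ne_zero j)).comp (tendsto_ell.comp hsucc))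
  have hj : ((j : ℝ) + 1) ≠ 0 := by positivity
  -- the terms satisfy `u i / v i → β / (j + 1)`
  have hv1 := (tendsto_ell_pow_sub j).comp hsucc
  have huv : (fun i => u i - β / (j + 1) * v i) =o[atTop] v := by
    have hu1 := ((h.comp hsucc).mul ((tendsto_succ_ratio.comp hsucc).inv₀ one_ne_zero))
    have hvpos' : ∀ᶠ i in atTop, 0 < v i := by
      filter_upwards [hv1.eventually (lt_mem_nhds (show (0 : ℝ) < j + 1 by positivity))] with i hi
      refine lt_of_le_of_ne (hvpos i) fun h0 => ?_
      have h0' : ell (i + 2) ^ (j + 1) - ell (i + 1) ^ (j + 1) = 0 := h0.symm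
      simp [Function.comp, h0'] at hi
    rw [Asymptotics.isLittleO_iff_tendsto' (hvpos'.mono fun i hi h0 => absurd h0 hi.ne')]
    have h3 := (hu1.div hv1 hj).sub_const (β / (j + 1))
    rw [show β * 1⁻¹ / ((j : ℝ) + 1) - β / (j + 1) = 0 by simp] at h3
    refine h3.congr' ?_
    filter_upwards [hvpos'] with i hi
    have e1 := (ell_pos (i + 1)).ne'
    have e2 : ((i : ℝ) + 1) ≠ 0 := by positivity
    have e3 : ((i : ℝ) + 2) ≠ 0 := by positivity
    have e4 : ((i : ℝ) + 1 + 1) ≠ 0 := by positivity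
    have hi' := hi.ne'
    have e5 : ell (i + 1 + 1) ^ (j + 1) - ell (i + 1) ^ (j + 1) = v i := rfl
    simp only [Function.comp, hu, Pi.div_apply, e5]
    push_cast
    field_simp
    ring
  have hsum := (huv.sum_range hvpos hvtop).tendsto_div_nhds_zero
  have hvratio : Tendsto (fun N => (∑ i ∈ Finset.range N, v i) / ell N ^ (j + 1)) atTop (𝓝 1) := by
    have hr := (tendsto_ell_ratio one_pos tendsto_succ_ratio).pow (j + 1)
    have h0 : Tendsto (fun N => 1 / ell N ^ (j + 1)) atTop (𝓝 0) :=
      tendsto_const_nhds.div_atTop ((tendsto_pow_atTop (Nat.succ_ne_zero j)).comp tendsto_ell)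
    have := hr.sub h0
    rw [one_pow, sub_zero] at this
    refine this.congr fun N => ?_
    rw [hvsum, div_pow, sub_div]
  have hfirst : Tendsto (fun N : ℕ => summ b N / (N + 1) / ell N ^ (j + 1)) atTop (𝓝 0) := by
    have h4 := ((h.mul (tendsto_succ_ratio.inv₀ one_ne_zero)).div_atTop tendsto_ell)
    refine h4.congr' ?_
    filter_upwards [eventually_gt_atTop 0] with N hN
    have e1 := (ell_pos N).ne'
    have e2 : (N : ℝ) ≠ 0 := by positivity
    push_cast
    field_simp
    ring
  have h5 := hfirst.add ((hsum.add_const (β / (j + 1))).mul hvratio)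
  rw [zero_add, zero_add, mul_one] at h5
  refine h5.congr' ?_
  filter_upwards [hvtop.eventually_gt_atTop 0] with N hN
  rw [sum_div_eq, Finset.sum_sub_distrib, ← Finset.mul_sum, add_div]
  have := (ell_pos N).ne'
  congr 1
  field_simp
  ring

/-- Convolution of `A(x) ∼ α x` and `B(x) ∼ β x (log x)^j`. -/
lemma HasGrowth.conv {a b : ArithmeticFunction ℝ} {j : ℕ} {α β : ℝ} (ha : HasGrowth a 0 α)
    (hb : HasGrowth b j β) (hb0 : ∀ n, 0 ≤ b n) :
    HasGrowth (b * a) (j + 1) (α * (β / (j + 1))) := by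
  have hP := hb.sum_div
  set P : ℕ → ℝ := fun N => ∑ n ∈ Finset.Ioc 0 N, b n / n with hPdef
  have hP0 : ∀ N, 0 ≤ P N := fun N => Finset.sum_nonneg fun n _ => div_nonneg (hb0 n) (by simp)
  have hmain : Tendsto (fun N : ℕ => α * (P N / ell N ^ (j + 1))) atTop
      (𝓝 (α * (β / (j + 1)))) := hP.const_mul α
  -- the error made by replacing `A(⌊N / d⌋)` by `α N / d`
  have herr : Tendsto (fun N : ℕ => summ (b * a) N / (N * ell N ^ (j + 1)) -
      α * (P N / ell N ^ (j + 1))) atTop (𝓝 0) := by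
    obtain ⟨CP, hCP⟩ := hP.bddAbove_range
    rw [Metric.tendsto_atTop]
    intro ε hε
    set η : ℝ := ε / (2 * (|CP| + 1)) with hη
    have hη0 : 0 < η := by positivity
    -- `|A(⌊y⌋) - α y| ≤ η y + C` for `y = N / d`
    obtain ⟨C, hC0, hC⟩ : ∃ C : ℝ, 0 ≤ C ∧ ∀ N d : ℕ, 0 < d →
        |summ a (N / d) - α * (N / d)| ≤ η * (N / d) + C := by
      have ha' : Tendsto (fun N : ℕ => summ a N / N) atTop (𝓝 α) := by
        simpa [HasGrowth] using ha
      obtain ⟨M0, hM0⟩ := Metric.tendsto_atTop.1 ha' η hη0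
      refine ⟨∑ m ∈ Finset.range (M0 + 1), |summ a m - α * m| + |α|, by positivity,
        fun N d hd => ?_⟩
      set M := N / d with hM
      have hd' : (0 : ℝ) < d := by positivity
      have hMle : (M : ℝ) ≤ N / d := Nat.cast_div_le
      have hMlt : (N : ℝ) / d < M + 1 := by
        rw [div_lt_iff₀ hd']
        have := Nat.lt_mul_div_succ N hd
        rw [mul_comm] at this
        exact_mod_cast this
      have hfrac : |α * M - α * (N / d)| ≤ |α| := by
        rw [← mul_sub, abs_mul]
        have : |(M : ℝ) - N / d| ≤ 1 := abs_le.2 ⟨by linarith, by linarith⟩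
        simpa using mul_le_mul_of_nonneg_left this (abs_nonneg α)
      have hcore : |summ a M - α * M| ≤
          η * M + ∑ m ∈ Finset.range (M0 + 1), |summ a m - α * m| := by
        have hs0 : 0 ≤ ∑ m ∈ Finset.range (M0 + 1), |summ a m - α * m| := by positivity
        rcases lt_or_ge M0 M with hlt | hge
        · have hMpos : (0 : ℝ) < M := by
            have : 0 < M := by omega
            positivity
          have := hM0 M hlt.le
          rw [Real.dist_eq, div_sub' hMpos.ne', abs_div, abs_of_pos hMpos,
            div_lt_iff₀ hMpos, mul_comm (M : ℝ) α] at this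
          linarith
        · have := Finset.single_le_sum (f := fun m : ℕ => |summ a m - α * m|)
            (fun i _ => abs_nonneg _) (Finset.mem_range.2 (Nat.lt_succ_of_le hge))
          have h0 : 0 ≤ η * M := by positivity
          linarith
      calc |summ a M - α * (N / d)| ≤ |summ a M - α * M| + |α * M - α * (N / d)| :=
            abs_sub_le _ _ _
        _ ≤ _ := by
            have := mul_le_mul_of_nonneg_left hMle hη0.le
            linarith
    have hsmall : Tendsto (fun N : ℕ => C * (summ b N / (N * ell N ^ j) / ell N)) atTop (𝓝 0) := by
      simpa using (hb.div_atTop tendsto_ell).const_mul C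
    obtain ⟨N1, hN1⟩ := (hsmall.eventually (gt_mem_nhds (half_pos hε))).exists_forall_of_atTop
    refine ⟨max N1 1, fun N hN => ?_⟩
    have hN0 : 0 < N := le_trans (le_max_right _ _) hN
    have hN' : (0 : ℝ) < N := by positivity
    have hl := ell_pos N
    rw [Real.dist_eq, sub_zero]
    have h1 : |summ (b * a) N - α * N * P N| ≤ η * N * P N + C * summ b N := by
      have e1 : summ (b * a) N - α * N * P N =
          ∑ d ∈ Finset.Ioc 0 N, b d * (summ a (N / d) - α * (N / d)) := by
        rw [summ_mul, hPdef, Finset.mul_sum, ← Finset.sum_sub_distrib]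
        exact Finset.sum_congr rfl fun d _ => by ring
      have e2 : η * N * P N + C * summ b N =
          ∑ d ∈ Finset.Ioc 0 N, b d * (η * (N / d) + C) := by
        rw [hPdef, summ, Finset.mul_sum, Finset.mul_sum, ← Finset.sum_add_distrib]
        exact Finset.sum_congr rfl fun d _ => by ring
      rw [e1, e2]
      refine (Finset.abs_sum_le_sum_abs _ _).trans (Finset.sum_le_sum fun d hd => ?_)
      rw [abs_mul, abs_of_nonneg (hb0 d)]
      exact mul_le_mul_of_nonneg_left (hC N d (Finset.mem_Ioc.1 hd).1) (hb0 d)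
    have h2 : η * (P N / ell N ^ (j + 1)) < ε / 2 := by
      have h3 : P N / ell N ^ (j + 1) ≤ |CP| := (hCP ⟨N, rfl⟩).trans (le_abs_self _)
      calc η * (P N / ell N ^ (j + 1)) ≤ η * |CP| := by gcongr
        _ < η * (|CP| + 1) := by
          have := hη0
          nlinarith
        _ = ε / 2 := by rw [hη]; field_simp
    have h3 := hN1 N (le_trans (le_max_left _ _) hN)
    have h4 : summ (b * a) N / (N * ell N ^ (j + 1)) - α * (P N / ell N ^ (j + 1)) =
        (summ (b * a) N - α * N * P N) / (N * ell N ^ (j + 1)) := by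
      field_simp
    rw [h4, abs_div, abs_of_pos (show 0 < N * ell N ^ (j + 1) by positivity)]
    calc |summ (b * a) N - α * N * P N| / (N * ell N ^ (j + 1))
        ≤ (η * N * P N + C * summ b N) / (N * ell N ^ (j + 1)) := by gcongr
      _ = η * (P N / ell N ^ (j + 1)) + C * (summ b N / (N * ell N ^ j) / ell N) := by
          field_simp
          ring
      _ < ε := by linarith
  have := herr.add hmain
  rw [zero_add] at this
  refine this.congr fun N => by ring


/-! ### Counting ideals of finite index -/

open ArithmeticFunction

/-- The arithmetic function `n ↦ a_n(A)`, the number of ideals of index `n` (with value `0` at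
`n = 0`, although `Nat.card` also assigns the junk index `0` to ideals of infinite index). -/
noncomputable def cnt (A : Type*) [CommRing A] : ArithmeticFunction ℝ :=
  ⟨fun n => if n = 0 then 0 else (Nat.card {I : Ideal A // Nat.card (A ⧸ I) = n} : ℝ), by simp⟩

lemma cnt_apply (A : Type*) [CommRing A] {n : ℕ} (hn : n ≠ 0) :
    cnt A n = (Nat.card {I : Ideal A // Nat.card (A ⧸ I) = n} : ℝ) := by
  simp [cnt, hn]

lemma cnt_nonneg (A : Type*) [CommRing A] (n : ℕ) : 0 ≤ cnt A n := by
  simp only [cnt, coe_mk]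
  split_ifs <;> positivity

/-- All prime factors of the nonzero number `n` divide `m`. -/
def Sm (m n : ℕ) : Prop := n ≠ 0 ∧ ∀ p : ℕ, p.Prime → p ∣ n → p ∣ m

open Classical in
/-- Restriction of `a` to the numbers all of whose prime factors divide `m`. -/
noncomputable def smoothPart (a : ArithmeticFunction ℝ) (m : ℕ) : ArithmeticFunction ℝ :=
  ⟨fun n => if Sm m n then a n else 0, by simp⟩

/-- Restriction of `a` to the numbers coprime to `m`. -/
noncomputable def copPart (a : ArithmeticFunction ℝ) (m : ℕ) : ArithmeticFunction ℝ :=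
  ⟨fun n => if n.Coprime m then a n else 0, by simp⟩

lemma smoothPart_apply (a : ArithmeticFunction ℝ) {m n : ℕ} (h : Sm m n) :
    smoothPart a m n = a n := by simp [smoothPart, h]

lemma smoothPart_apply' (a : ArithmeticFunction ℝ) {m n : ℕ} (h : ¬ Sm m n) :
    smoothPart a m n = 0 := by simp [smoothPart, h]

lemma copPart_apply (a : ArithmeticFunction ℝ) {m n : ℕ} (h : n.Coprime m) :
    copPart a m n = a n := by simp [copPart, h]

lemma copPart_apply' (a : ArithmeticFunction ℝ) {m n : ℕ} (h : ¬ n.Coprime m) :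
    copPart a m n = 0 := by simp [copPart, h]

lemma smoothPart_nonneg {a : ArithmeticFunction ℝ} (ha : ∀ n, 0 ≤ a n) (m n : ℕ) :
    0 ≤ smoothPart a m n := by
  by_cases h : Sm m n
  · rw [smoothPart_apply a h]; exact ha n
  · rw [smoothPart_apply' a h]

lemma copPart_nonneg {a : ArithmeticFunction ℝ} (ha : ∀ n, 0 ≤ a n) (m n : ℕ) :
    0 ≤ copPart a m n := by
  by_cases h : n.Coprime m
  · rw [copPart_apply a h]; exact ha n
  · rw [copPart_apply' a h]

lemma Sm.coprime {m d e : ℕ} (hd : Sm m d) (he : e.Coprime m) : d.Coprime e := by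
  refine Nat.Coprime.symm (Nat.coprime_of_dvd fun p hp hpe hpd => ?_)
  exact Nat.not_coprime_of_dvd_of_dvd hp.one_lt hpe (hd.2 p hp hpd) he

lemma exists_smooth_mul_coprime (m n : ℕ) (hn : n ≠ 0) :
    ∃ d e, n = d * e ∧ Sm m d ∧ e.Coprime m := by
  induction n using Nat.strong_induction_on with
  | _ n ih =>
    by_cases h : n.Coprime m
    · exact ⟨1, n, by simp, ⟨one_ne_zero, fun p hp h1 => absurd (Nat.dvd_one.1 h1) hp.ne_one⟩, h⟩
    · obtain ⟨p, hp, ⟨n', rfl⟩, hpm⟩ := Nat.Prime.not_coprime_iff_dvd.1 h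
      have hn' : n' ≠ 0 := by rintro rfl; simp at hn
      obtain ⟨d, e, rfl, hd, he⟩ := ih n' (by
        have := hp.one_lt
        have : 0 < n' := Nat.pos_of_ne_zero hn'
        nlinarith) hn'
      refine ⟨p * d, e, by ring, ⟨mul_ne_zero hp.ne_zero hd.1, fun q hq hqd => ?_⟩, he⟩
      rcases (hq.dvd_mul).1 hqd with h1 | h1
      · rwa [(Nat.prime_dvd_prime_iff_eq hq hp).1 h1]
      · exact hd.2 q hq h1

/-- The Euler-product factorisation of a multiplicative function into the part at the primes
dividing `m` and the part coprime to `m`. -/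
lemma smoothPart_mul_copPart {a : ArithmeticFunction ℝ} (ha : a.IsMultiplicative) (m : ℕ) :
    smoothPart a m * copPart a m = a := by
  ext n
  rcases eq_or_ne n 0 with rfl | hn
  · simp
  obtain ⟨d, e, rfl, hd, he⟩ := exists_smooth_mul_coprime m n hn
  rw [mul_apply, Finset.sum_eq_single (d, e)]
  · rw [smoothPart_apply a hd, copPart_apply a he, ha.map_mul_of_coprime (hd.coprime he)]
  · rintro ⟨d', e'⟩ hmem hne
    by_cases hd' : Sm m d'
    · by_cases he' : e'.Coprime m
      · exfalso
        have heq : d' * e' = d * e := (Nat.mem_divisorsAntidiagonal.1 hmem).1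
        have h1 : d' ∣ d := (hd'.coprime he).dvd_of_dvd_mul_right (heq ▸ dvd_mul_right d' e')
        have h2 : d ∣ d' := (hd.coprime he').dvd_of_dvd_mul_right (heq ▸ dvd_mul_right d e)
        obtain rfl := Nat.dvd_antisymm h1 h2
        exact hne (by rw [Nat.eq_of_mul_eq_mul_left (Nat.pos_of_ne_zero hd.1) heq])
      · simp [copPart_apply' a he']
    · simp [smoothPart_apply' a hd']
  · intro h
    exact absurd (Nat.mem_divisorsAntidiagonal.2 ⟨rfl, hn⟩) h

section Ring
variable {A : Type*} [CommRing A]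

lemma card_mem (I : Ideal A) : (Nat.card (A ⧸ I) : A) ∈ I := by
  rw [← Ideal.Quotient.eq_zero_iff_mem, map_natCast, ← nsmul_one]
  exact card_nsmul_eq_zero'

lemma mem_of_card_eq {I : Ideal A} {n : ℕ} (h : Nat.card (A ⧸ I) = n) : (n : A) ∈ I := by
  rw [← h]
  exact card_mem I

/-- Cauchy's theorem: every prime factor of the order of a group divides any exponent. -/
lemma prime_dvd_of_exponent {G : Type*} [AddCommGroup G] {m p : ℕ} (hG : Nat.card G ≠ 0)
    (hm : ∀ x : G, m • x = 0) (hp : p.Prime) (hpG : p ∣ Nat.card G) : p ∣ m := by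
  have : Finite G := Nat.finite_of_card_ne_zero hG
  have : Fact p.Prime := ⟨hp⟩
  obtain ⟨x, hx⟩ := exists_prime_addOrderOf_dvd_card' p hpG
  rw [← hx]
  exact addOrderOf_dvd_of_nsmul_eq_zero (hm x)

lemma prime_dvd_of_mem {I : Ideal A} {m p : ℕ} (hI : Nat.card (A ⧸ I) ≠ 0) (hm : (m : A) ∈ I)
    (hp : p.Prime) (h : p ∣ Nat.card (A ⧸ I)) : p ∣ m := by
  refine prime_dvd_of_exponent hI (fun x => ?_) hp h
  rw [nsmul_eq_mul, ← map_natCast (Ideal.Quotient.mk I), Ideal.Quotient.eq_zero_iff_mem.2 hm,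
    zero_mul]

lemma one_mem_of_coprime {I : Ideal A} {a b : ℕ} (hab : a.Coprime b) (ha : (a : A) ∈ I)
    (hb : (b : A) ∈ I) : (1 : A) ∈ I := by
  have h := Nat.gcd_eq_gcd_ab a b
  rw [hab.gcd_eq_one] at h
  have h2 : (1 : A) = a * (Nat.gcdA a b : A) + b * (Nat.gcdB a b : A) := by
    exact_mod_cast congrArg (fun z : ℤ => (z : A)) h
  rw [h2]
  exact I.add_mem (I.mul_mem_right _ ha) (I.mul_mem_right _ hb)

lemma mem_of_coprime {I : Ideal A} {a b : ℕ} (hab : a.Coprime b) {x : A} (ha : (a : A) * x ∈ I)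
    (hb : (b : A) * x ∈ I) : x ∈ I := by
  have h := Nat.gcd_eq_gcd_ab a b
  rw [hab.gcd_eq_one] at h
  have h2 : (1 : A) = a * (Nat.gcdA a b : A) + b * (Nat.gcdB a b : A) := by
    exact_mod_cast congrArg (fun z : ℤ => (z : A)) h
  have h3 : x = (Nat.gcdA a b : A) * (a * x) + (Nat.gcdB a b : A) * (b * x) := by
    linear_combination x * h2
  rw [h3]
  exact I.add_mem (I.mul_mem_left _ ha) (I.mul_mem_left _ hb)

lemma isCoprime_of_coprime_card {I J : Ideal A}
    (h : (Nat.card (A ⧸ I)).Coprime (Nat.card (A ⧸ J))) : IsCoprime I J := by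
  rw [Ideal.isCoprime_iff_sup_eq, Ideal.eq_top_iff_one]
  exact one_mem_of_coprime h (Ideal.mem_sup_left (card_mem I)) (Ideal.mem_sup_right (card_mem J))

lemma card_inf {I J : Ideal A} (h : IsCoprime I J) :
    Nat.card (A ⧸ (I ⊓ J)) = Nat.card (A ⧸ I) * Nat.card (A ⧸ J) := by
  rw [← Nat.card_prod]
  exact Nat.card_congr (Ideal.quotientInfEquivQuotientProd I J h).toEquiv

lemma inf_sup_span_s8 {I J : Ideal A} {a b : ℕ} (hab : a.Coprime b) (ha : (a : A) ∈ I)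
    (hb : (b : A) ∈ J) : I ⊓ J ⊔ Ideal.span {(a : A)} = I := by
  apply le_antisymm
  · exact sup_le inf_le_left ((Ideal.span_singleton_le_iff_mem _).2 ha)
  · intro x hx
    refine mem_of_coprime hab ?_ ?_
    · exact Ideal.mem_sup_right (Ideal.mul_mem_right _ _ (Ideal.mem_span_singleton_self _))
    · exact Ideal.mem_sup_left ⟨I.mul_mem_left _ hx, J.mul_mem_right _ hb⟩

lemma span_sup_inf {I : Ideal A} {a b : ℕ} (hab : a.Coprime b) (h : ((a * b : ℕ) : A) ∈ I) :
    (I ⊔ Ideal.span {(a : A)}) ⊓ (I ⊔ Ideal.span {(b : A)}) = I := by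
  apply le_antisymm
  · rintro x ⟨hx1, hx2⟩
    obtain ⟨i, hi, r, hr, rfl⟩ := Submodule.mem_sup.1 hx1
    obtain ⟨i', hi', r', hr', he⟩ := Submodule.mem_sup.1 hx2
    obtain ⟨s, rfl⟩ := Ideal.mem_span_singleton'.1 hr
    obtain ⟨s', rfl⟩ := Ideal.mem_span_singleton'.1 hr'
    push_cast at h
    refine mem_of_coprime hab ?_ ?_
    · rw [← he, show (a : A) * (i' + s' * b) = a * i' + s' * (a * b) by ring]
      exact I.add_mem (I.mul_mem_left _ hi') (I.mul_mem_left _ h)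
    · rw [show (b : A) * (i + s * a) = b * i + s * (a * b) by ring]
      exact I.add_mem (I.mul_mem_left _ hi) (I.mul_mem_left _ h)
  · exact le_inf le_sup_left le_sup_left

/-- The Chinese remainder theorem makes `n ↦ a_n(A)` multiplicative: an ideal of index `a * b`
with `a`, `b` coprime is the intersection of a unique pair of ideals of index `a` and `b`. -/
noncomputable def idealsCoprimeEquiv {a b : ℕ} (ha : a ≠ 0) (hb : b ≠ 0) (hab : a.Coprime b) :
    {I : Ideal A // Nat.card (A ⧸ I) = a * b} ≃
      {I : Ideal A // Nat.card (A ⧸ I) = a} × {I : Ideal A // Nat.card (A ⧸ I) = b} where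
  toFun I := by
    have hmem : ((a * b : ℕ) : A) ∈ I.1 := mem_of_card_eq I.2
    have hcop : IsCoprime (I.1 ⊔ Ideal.span {(a : A)}) (I.1 ⊔ Ideal.span {(b : A)}) := by
      rw [Ideal.isCoprime_iff_sup_eq, Ideal.eq_top_iff_one]
      exact one_mem_of_coprime hab
        (Ideal.mem_sup_left (Ideal.mem_sup_right (Ideal.mem_span_singleton_self _)))
        (Ideal.mem_sup_right (Ideal.mem_sup_right (Ideal.mem_span_singleton_self _)))
    have hc := card_inf hcop
    rw [span_sup_inf hab hmem, I.2] at hc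
    have hne : a * b ≠ 0 := mul_ne_zero ha hb
    have hne1 : Nat.card (A ⧸ (I.1 ⊔ Ideal.span {(a : A)})) ≠ 0 := fun h => hne (by simp [hc, h])
    have hne2 : Nat.card (A ⧸ (I.1 ⊔ Ideal.span {(b : A)})) ≠ 0 := fun h => hne (by simp [hc, h])
    have h1 : (Nat.card (A ⧸ (I.1 ⊔ Ideal.span {(a : A)}))).Coprime b :=
      Nat.coprime_of_dvd fun p hp hp1 hp2 => Nat.not_coprime_of_dvd_of_dvd hp.one_lt
        (prime_dvd_of_mem hne1 (Ideal.mem_sup_right (Ideal.mem_span_singleton_self _)) hp hp1)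
        hp2 hab
    have h2 : (Nat.card (A ⧸ (I.1 ⊔ Ideal.span {(b : A)}))).Coprime a :=
      Nat.coprime_of_dvd fun p hp hp1 hp2 => Nat.not_coprime_of_dvd_of_dvd hp.one_lt hp2
        (prime_dvd_of_mem hne2 (Ideal.mem_sup_right (Ideal.mem_span_singleton_self _)) hp hp1) hab
    have e1 : Nat.card (A ⧸ (I.1 ⊔ Ideal.span {(a : A)})) = a :=
      Nat.dvd_antisymm (h1.dvd_of_dvd_mul_right (Dvd.intro _ hc.symm))
        (h2.symm.dvd_of_dvd_mul_right (Dvd.intro _ hc))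
    have e2 : Nat.card (A ⧸ (I.1 ⊔ Ideal.span {(b : A)})) = b :=
      Nat.dvd_antisymm (h2.dvd_of_dvd_mul_left (Dvd.intro_left _ hc.symm))
        (h1.symm.dvd_of_dvd_mul_left (Dvd.intro_left _ hc))
    exact (⟨_, e1⟩, ⟨_, e2⟩)
  invFun P := ⟨P.1.1 ⊓ P.2.1, by
    rw [card_inf (isCoprime_of_coprime_card (by rw [P.1.2, P.2.2]; exact hab)), P.1.2, P.2.2]⟩
  left_inv I := Subtype.ext (span_sup_inf hab (mem_of_card_eq I.2))
  right_inv P := by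
    have h1 : (a : A) ∈ P.1.1 := mem_of_card_eq P.1.2
    have h2 : (b : A) ∈ P.2.1 := mem_of_card_eq P.2.2
    refine Prod.ext (Subtype.ext (inf_sup_span_s8 hab h1 h2)) (Subtype.ext ?_)
    change P.1.1 ⊓ P.2.1 ⊔ Ideal.span {(b : A)} = P.2.1
    rw [inf_comm]
    exact inf_sup_span_s8 hab.symm h2 h1

lemma cnt_one (A : Type*) [CommRing A] : cnt A 1 = 1 := by
  rw [cnt_apply A one_ne_zero]
  have : Unique {I : Ideal A // Nat.card (A ⧸ I) = 1} :=
    { default := ⟨⊤, by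
        have : Subsingleton (A ⧸ (⊤ : Ideal A)) := Ideal.Quotient.subsingleton_iff.2 rfl
        exact Nat.card_of_subsingleton 0⟩
      uniq := fun I => Subtype.ext (by
        have := Nat.card_eq_one_iff_unique.1 I.2
        exact Ideal.Quotient.subsingleton_iff.1 this.1) }
  simp

lemma cnt_isMultiplicative (A : Type*) [CommRing A] : (cnt A).IsMultiplicative := by
  refine ⟨cnt_one A, ?_⟩
  intro a b hab
  rcases eq_or_ne a 0 with rfl | ha
  · simp
  rcases eq_or_ne b 0 with rfl | hb
  · simp
  rw [cnt_apply A (mul_ne_zero ha hb), cnt_apply A ha, cnt_apply A hb,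
    Nat.card_congr (idealsCoprimeEquiv ha hb hab), Nat.card_prod, Nat.cast_mul]

lemma finite_of_nsmul_eq_zero {M : Type*} [AddCommGroup M] [Module.Finite ℤ M] {n : ℕ}
    (hn : n ≠ 0) (h : ∀ x : M, n • x = 0) : Finite M := by
  refine Module.finite_of_fg_torsion M ?_
  intro x
  exact ⟨⟨(n : ℤ), mem_nonZeroDivisors_of_ne_zero (by exact_mod_cast hn)⟩, by
    simpa [Submonoid.smul_def] using h x⟩

lemma finite_ideals [Module.Finite ℤ A] {n : ℕ} (hn : n ≠ 0) :
    Finite {I : Ideal A // Nat.card (A ⧸ I) = n} := by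
  set J : Ideal A := Ideal.span {(n : A)} with hJ
  have : Module.Finite ℤ (A ⧸ J) :=
    Module.Finite.of_surjective (Ideal.Quotient.mk J).toAddMonoidHom.toIntLinearMap
      Ideal.Quotient.mk_surjective
  have hfin : Finite (A ⧸ J) := finite_of_nsmul_eq_zero hn fun x => by
    rw [nsmul_eq_mul, ← map_natCast (Ideal.Quotient.mk J),
      Ideal.Quotient.eq_zero_iff_mem.2 (Ideal.mem_span_singleton_self _), zero_mul]
  have : Finite (Ideal (A ⧸ J)) := Finite.of_injective (fun I => (I : Set (A ⧸ J)))
    SetLike.coe_injective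
  refine Finite.of_injective (β := Ideal (A ⧸ J)) (fun I => I.1.map (Ideal.Quotient.mk J)) ?_
  have hle : ∀ I : {I : Ideal A // Nat.card (A ⧸ I) = n}, J ≤ I.1 := fun I =>
    (Ideal.span_singleton_le_iff_mem _).2 (mem_of_card_eq I.2)
  intro I I' h
  have hcomap := congrArg (Ideal.comap (Ideal.Quotient.mk J)) h
  simp only [Ideal.comap_map_of_surjective _ Ideal.Quotient.mk_surjective,
    ← RingHom.ker_eq_comap_bot, Ideal.mk_ker, sup_of_le_left (hle I),
    sup_of_le_left (hle I')] at hcomap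
  exact Subtype.ext hcomap

/-- The part of the zeta function of `A` at the primes dividing `m` converges at `s = 1`. -/
def LocSum (A : Type*) [CommRing A] (m : ℕ) : Prop :=
  Summable fun I : {I : Ideal A // Sm m (Nat.card (A ⧸ I))} => (1 : ℝ) / Nat.card (A ⧸ I.1)

lemma locSum_iff (A : Type*) [CommRing A] [Module.Finite ℤ A] (m : ℕ) :
    LocSum A m ↔ Summable fun n : ℕ => smoothPart (cnt A) m n / n := by
  set N : {I : Ideal A // Sm m (Nat.card (A ⧸ I))} → ℕ := fun I => Nat.card (A ⧸ I.1) with hN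
  have hfin : ∀ n : ℕ, Finite {x // N x = n} := by
    intro n
    rcases eq_or_ne n 0 with rfl | hn
    · have : IsEmpty {x // N x = 0} := ⟨fun x => x.1.2.1 x.2⟩
      infer_instance
    · have := finite_ideals (A := A) hn
      exact Finite.of_injective (β := {I : Ideal A // Nat.card (A ⧸ I) = n})
        (fun x => ⟨x.1.1, x.2⟩) fun x y h => Subtype.ext (Subtype.ext (Subtype.mk.inj h))
  have hcard : ∀ n : ℕ, (Nat.card {x // N x = n} : ℝ) = smoothPart (cnt A) m n := by
    intro n
    by_cases h : Sm m n
    · rw [smoothPart_apply _ h, cnt_apply A h.1]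
      congr 1
      exact Nat.card_congr
        { toFun := fun x => ⟨x.1.1, x.2⟩
          invFun := fun I => ⟨⟨I.1, by rw [I.2]; exact h⟩, I.2⟩
          left_inv := fun _ => rfl
          right_inv := fun _ => rfl }
    · rw [smoothPart_apply' _ h]
      have : IsEmpty {x // N x = n} := ⟨fun x => h (x.2 ▸ x.1.2)⟩
      simp
  unfold LocSum
  rw [← (Equiv.sigmaFiberEquiv N).summable_iff, summable_sigma_of_nonneg (fun x => by
    simp only [Function.comp]; positivity)]
  have hval : ∀ n : ℕ, ∑' x : {x // N x = n}, (1 : ℝ) / Nat.card (A ⧸ x.1.1) =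
      smoothPart (cnt A) m n / n := by
    intro n
    have := hfin n
    have := Fintype.ofFinite {x // N x = n}
    rw [tsum_fintype, ← hcard, Finset.sum_congr rfl (g := fun _ => (1 : ℝ) / n), Finset.sum_const,
      Finset.card_univ, ← Nat.card_eq_fintype_card, nsmul_eq_mul, mul_one_div]
    intro x _
    have hx : Nat.card (A ⧸ x.1.1) = n := x.2
    rw [hx]
  constructor
  · rintro ⟨_, h⟩
    exact h.congr fun n => hval n
  · intro h
    refine ⟨fun n => ?_, h.congr fun n => (hval n).symm⟩
    have := hfin n
    have := Fintype.ofFinite {x // N x = n}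
    exact (hasSum_fintype _).summable

/-- The inductive package: outside a suitable modulus the ideal count of `A` grows like
`c N (log N)^j`, and the Euler factors at the primes dividing the modulus converge at `s = 1`. -/
def Good (A : Type*) [CommRing A] (j : ℕ) : Prop :=
  ∃ m₀ : ℕ, m₀ ≠ 0 ∧ ∀ m : ℕ, m ≠ 0 → m₀ ∣ m →
    LocSum A m ∧ ∃ c : ℝ, 0 < c ∧ HasGrowth (copPart (cnt A) m) j c

lemma Good.hasGrowth [Module.Finite ℤ A] {j : ℕ} (h : Good A j) :
    ∃ c : ℝ, 0 < c ∧ HasGrowth (cnt A) j c := by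
  obtain ⟨m, hm, h⟩ := h
  obtain ⟨hs, c, hc, hg⟩ := h m hm dvd_rfl
  have hs' := (locSum_iff A m).1 hs
  have hw := smoothPart_nonneg (cnt_nonneg A) m
  have h1 := hg.conv_summable (copPart_nonneg (cnt_nonneg A) m) hw hs'
  rw [smoothPart_mul_copPart (cnt_isMultiplicative A)] at h1
  refine ⟨_, ?_, h1⟩
  have hs2 : Summable fun n : ℕ => smoothPart (cnt A) m n * (c / n) :=
    (hs'.mul_left c).congr fun n => by ring
  refine hs2.tsum_pos (fun n => mul_nonneg (hw n) (by positivity)) 1 ?_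
  have h1 : Sm m 1 := ⟨one_ne_zero, fun p hp h1 => absurd (Nat.dvd_one.1 h1) hp.ne_one⟩
  rw [smoothPart_apply _ h1, cnt_one]
  simpa using hc

end Ring

/-! ### Products and subrings of finite index -/

open ArithmeticFunction

section Prod
variable {A B : Type*} [CommRing A] [CommRing B]

lemma card_quot_prod (I : Ideal A) (J : Ideal B) :
    Nat.card ((A × B) ⧸ I.prod J) = Nat.card (A ⧸ I) * Nat.card (B ⧸ J) :=
  AddSubgroup.index_prod (Submodule.toAddSubgroup I) (Submodule.toAddSubgroup J)

lemma cnt_prod (A B : Type*) [CommRing A] [CommRing B] [Module.Finite ℤ A] [Module.Finite ℤ B] :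
    cnt (A × B) = cnt A * cnt B := by
  ext n
  rcases eq_or_ne n 0 with rfl | hn
  · simp
  let F : (Σ p : n.divisorsAntidiagonal, {I : Ideal A // Nat.card (A ⧸ I) = p.1.1} ×
        {J : Ideal B // Nat.card (B ⧸ J) = p.1.2}) →
      {I : Ideal (A × B) // Nat.card ((A × B) ⧸ I) = n} :=
    fun x => ⟨x.2.1.1.prod x.2.2.1, by
      rw [card_quot_prod, x.2.1.2, x.2.2.2]
      exact (Nat.mem_divisorsAntidiagonal.1 x.1.2).1⟩
  have e := (Equiv.ofBijective F (by
      constructor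
      · rintro ⟨⟨⟨a, b⟩, hp⟩, ⟨I, hI⟩, ⟨J, hJ⟩⟩ ⟨⟨⟨a', b'⟩, hp'⟩, ⟨I', hI'⟩, ⟨J', hJ'⟩⟩ h
        change Nat.card (A ⧸ I) = a at hI
        change Nat.card (B ⧸ J) = b at hJ
        change Nat.card (A ⧸ I') = a' at hI'
        change Nat.card (B ⧸ J') = b' at hJ'
        subst hI hJ hI' hJ'
        have h1 : I.prod J = I'.prod J' := congrArg Subtype.val h
        obtain ⟨rfl, rfl⟩ := Ideal.prod_inj.1 h1
        rfl
      · rintro ⟨I, hI⟩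
        have h0 := Ideal.idealProdEquiv.symm_apply_apply I
        rw [Ideal.idealProdEquiv_symm_apply] at h0
        refine ⟨⟨⟨(Nat.card (A ⧸ (Ideal.idealProdEquiv I).1),
          Nat.card (B ⧸ (Ideal.idealProdEquiv I).2)), ?_⟩, ⟨_, rfl⟩, ⟨_, rfl⟩⟩, Subtype.ext h0⟩
        rw [Nat.mem_divisorsAntidiagonal]
        refine ⟨?_, hn⟩
        simp only
        rw [← card_quot_prod, ← hI]
        exact congrArg (fun K : Ideal (A × B) => Nat.card ((A × B) ⧸ K)) h0)).symm
  have hfin : ∀ p : n.divisorsAntidiagonal, Finite ({I : Ideal A // Nat.card (A ⧸ I) = p.1.1} ×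
        {J : Ideal B // Nat.card (B ⧸ J) = p.1.2}) := by
    intro p
    have := finite_ideals (A := A) (Nat.left_ne_zero_of_mem_divisorsAntidiagonal p.2)
    have := finite_ideals (A := B) (Nat.right_ne_zero_of_mem_divisorsAntidiagonal p.2)
    infer_instance
  rw [cnt_apply _ hn, Nat.card_congr e, Nat.card_sigma, mul_apply, Nat.cast_sum,
    ← Finset.sum_coe_sort n.divisorsAntidiagonal]
  refine Finset.sum_congr rfl fun p _ => ?_
  rw [Nat.card_prod, Nat.cast_mul,
    cnt_apply A (Nat.left_ne_zero_of_mem_divisorsAntidiagonal p.2),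
    cnt_apply B (Nat.right_ne_zero_of_mem_divisorsAntidiagonal p.2)]

lemma copPart_mul (a b : ArithmeticFunction ℝ) (m : ℕ) :
    copPart (a * b) m = copPart a m * copPart b m := by
  ext n
  by_cases h : n.Coprime m
  · rw [copPart_apply _ h, mul_apply, mul_apply]
    refine Finset.sum_congr rfl fun p hp => ?_
    have hp' := (Nat.mem_divisorsAntidiagonal.1 hp).1
    rw [copPart_apply _ (h.coprime_dvd_left (Dvd.intro _ hp')),
      copPart_apply _ (h.coprime_dvd_left (Dvd.intro_left _ hp'))]
  · rw [copPart_apply' _ h, mul_apply]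
    refine (Finset.sum_eq_zero fun p hp => ?_).symm
    have hp' := (Nat.mem_divisorsAntidiagonal.1 hp).1
    by_cases h1 : p.1.Coprime m
    · by_cases h2 : p.2.Coprime m
      · exact absurd (hp' ▸ h1.mul_left h2) h
      · simp [copPart_apply' b h2]
    · simp [copPart_apply' a h1]

lemma sm_mul_iff {m a b : ℕ} : Sm m (a * b) ↔ Sm m a ∧ Sm m b := by
  constructor
  · rintro ⟨h, hp⟩
    exact ⟨⟨left_ne_zero_of_mul h, fun p pp hd => hp p pp (hd.mul_right b)⟩,
      ⟨right_ne_zero_of_mul h, fun p pp hd => hp p pp (hd.mul_left a)⟩⟩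
  · rintro ⟨⟨ha, ha'⟩, ⟨hb, hb'⟩⟩
    refine ⟨mul_ne_zero ha hb, fun p pp hd => ?_⟩
    rcases pp.dvd_mul.1 hd with h | h
    · exact ha' p pp h
    · exact hb' p pp h

lemma Sm.of_dvd {m a b : ℕ} (hb : Sm m b) (h : a ∣ b) : Sm m a := by
  obtain ⟨c, rfl⟩ := h
  exact (sm_mul_iff.1 hb).1

lemma LocSum.prod {m : ℕ} (hA : LocSum A m) (hB : LocSum B m) : LocSum (A × B) m := by
  have h := hA.mul_of_nonneg hB (fun _ => by simp only [Pi.zero_apply]; positivity)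
    (fun _ => by simp only [Pi.zero_apply]; positivity)
  have key : ∀ K : Ideal (A × B), Nat.card ((A × B) ⧸ K) =
      Nat.card (A ⧸ (Ideal.idealProdEquiv K).1) * Nat.card (B ⧸ (Ideal.idealProdEquiv K).2) := by
    intro K
    rw [← card_quot_prod, ← Ideal.idealProdEquiv_symm_apply]
    exact congrArg (fun K : Ideal (A × B) => Nat.card ((A × B) ⧸ K))
      (Ideal.idealProdEquiv.symm_apply_apply K).symm
  let i : {K : Ideal (A × B) // Sm m (Nat.card ((A × B) ⧸ K))} →
      {I : Ideal A // Sm m (Nat.card (A ⧸ I))} × {J : Ideal B // Sm m (Nat.card (B ⧸ J))} :=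
    fun K => (⟨(Ideal.idealProdEquiv K.1).1, (sm_mul_iff.1 (key K.1 ▸ K.2)).1⟩,
      ⟨(Ideal.idealProdEquiv K.1).2, (sm_mul_iff.1 (key K.1 ▸ K.2)).2⟩)
  have hi : Function.Injective i := by
    intro K K' hKK
    apply Subtype.ext
    apply Ideal.idealProdEquiv.injective
    have h1 := congrArg (fun x => x.1.1) hKK
    have h2 := congrArg (fun x => x.2.1) hKK
    exact Prod.ext h1 h2
  refine (h.comp_injective hi).congr fun K => ?_
  simp only [Function.comp, i]
  rw [key K.1]
  push_cast
  rw [one_div_mul_one_div]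

/-- `ζ_{A × B} = ζ_A ζ_B`, and a simple pole raises the exponent of the logarithm by one. -/
lemma Good.prod [Module.Finite ℤ A] [Module.Finite ℤ B] {j : ℕ} (hA : Good A j) (hB : Good B 0) :
    Good (A × B) (j + 1) := by
  obtain ⟨m₁, h1, hA⟩ := hA
  obtain ⟨m₂, h2, hB⟩ := hB
  refine ⟨m₁ * m₂, mul_ne_zero h1 h2, fun m hm hdvd => ?_⟩
  obtain ⟨sA, a, ha, gA⟩ := hA m hm (dvd_of_mul_right_dvd hdvd)
  obtain ⟨sB, b, hb, gB⟩ := hB m hm (dvd_of_mul_left_dvd hdvd)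
  refine ⟨sA.prod sB, b * (a / (j + 1)), by positivity, ?_⟩
  rw [cnt_prod, copPart_mul]
  exact gB.conv gA (copPart_nonneg (cnt_nonneg A) m)

end Prod

section Transfer
variable {R O : Type*} [CommRing R] [CommRing O] {φ : R →+* O} {m : ℕ}

lemma card_comap (hφ : ∀ y : O, ∃ x, φ x = m * y) {n : ℕ} (hn : n.Coprime m) {J : Ideal O}
    (hJ : (n : O) ∈ J) : Nat.card (R ⧸ J.comap φ) = Nat.card (O ⧸ J) := by
  refine Nat.card_congr (Equiv.ofBijective (Ideal.quotientMap J φ le_rfl)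
    ⟨Ideal.quotientMap_injective, ?_⟩)
  intro y
  obtain ⟨y, rfl⟩ := Ideal.Quotient.mk_surjective y
  have h := Nat.gcd_eq_gcd_ab n m
  rw [hn.gcd_eq_one] at h
  have h2 : (1 : O) = n * (Nat.gcdA n m : O) + m * (Nat.gcdB n m : O) := by
    exact_mod_cast congrArg (fun z : ℤ => (z : O)) h
  obtain ⟨x, hx⟩ := hφ (Nat.gcdB n m * y)
  refine ⟨Ideal.Quotient.mk _ x, ?_⟩
  rw [Ideal.quotientMap_mk, hx, Ideal.Quotient.eq]
  rw [show (m : O) * (Nat.gcdB n m * y) - y = -(n * (Nat.gcdA n m * y)) by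
    linear_combination -y * h2]
  exact J.neg_mem (J.mul_mem_right _ hJ)

/-- `m • I O ⊆ φ(I)` whenever `m O ⊆ φ(R)`. -/
lemma exists_of_mem_map (hφ : ∀ y : O, ∃ x, φ x = m * y) {I : Ideal R} {y : O}
    (hy : y ∈ I.map φ) : ∃ x ∈ I, φ x = m * y := by
  suffices h : ∀ a : O, ∃ x ∈ I, φ x = m * (a * y) by simpa using h 1
  refine Submodule.span_induction (p := fun y _ => ∀ a : O, ∃ x ∈ I, φ x = m * (a * y))
    ?_ ?_ ?_ ?_ hy
  · rintro _ ⟨x, hx, rfl⟩ a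
    obtain ⟨r, hr⟩ := hφ a
    exact ⟨r * x, I.mul_mem_left _ hx, by rw [map_mul, hr, mul_assoc]⟩
  · exact fun a => ⟨0, I.zero_mem, by simp⟩
  · intro y y' _ _ h h' a
    obtain ⟨x, hx, e⟩ := h a
    obtain ⟨x', hx', e'⟩ := h' a
    exact ⟨x + x', I.add_mem hx hx', by rw [map_add, e, e']; ring⟩
  · intro b y _ h a
    obtain ⟨x, hx, e⟩ := h (a * b)
    exact ⟨x, hx, by rw [e, smul_eq_mul]; ring⟩

lemma comap_map_eq (hinj : Function.Injective φ) (hφ : ∀ y : O, ∃ x, φ x = m * y) {n : ℕ}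
    (hn : n.Coprime m) {I : Ideal R} (hI : (n : R) ∈ I) : (I.map φ).comap φ = I := by
  refine le_antisymm (fun x hx => ?_) Ideal.le_comap_map
  obtain ⟨x', hx', e⟩ := exists_of_mem_map hφ hx
  refine mem_of_coprime hn (I.mul_mem_right _ hI) ?_
  rwa [show (m : R) * x = x' from hinj (by rw [e]; simp)]

lemma map_comap_eq (hφ : ∀ y : O, ∃ x, φ x = m * y) {n : ℕ}
    (hn : n.Coprime m) {J : Ideal O} (hJ : (n : O) ∈ J) : (J.comap φ).map φ = J := by
  refine le_antisymm Ideal.map_comap_le (fun y hy => ?_)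
  refine mem_of_coprime hn ?_ ?_
  · have : φ n ∈ (J.comap φ).map φ := Ideal.mem_map_of_mem φ (by simpa using hJ)
    rw [map_natCast] at this
    exact Ideal.mul_mem_right _ _ this
  · obtain ⟨x, hx⟩ := hφ y
    rw [← hx]
    exact Ideal.mem_map_of_mem φ (by
      rw [Ideal.mem_comap, hx]
      exact J.mul_mem_left _ hy)

/-- Extension and contraction identify the ideals of `R` and of `O` whose index is coprime to the
conductor `m`. -/
lemma cnt_eq_of_coprime (hinj : Function.Injective φ) (hφ : ∀ y : O, ∃ x, φ x = m * y) {n : ℕ}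
    (hn : n.Coprime m) : cnt R n = cnt O n := by
  rcases eq_or_ne n 0 with rfl | hn0
  · simp
  rw [cnt_apply R hn0, cnt_apply O hn0]
  congr 1
  exact Nat.card_congr
    { toFun := fun I => ⟨I.1.map φ, by
        have hI : (n : R) ∈ I.1 := mem_of_card_eq I.2
        rw [← card_comap hφ hn (by simpa using Ideal.mem_map_of_mem φ hI),
          comap_map_eq hinj hφ hn hI, I.2]⟩
      invFun := fun J => ⟨J.1.comap φ, by
        rw [card_comap hφ hn (mem_of_card_eq J.2), J.2]⟩
      left_inv := fun I => Subtype.ext (comap_map_eq hinj hφ hn (mem_of_card_eq I.2))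
      right_inv := fun J => Subtype.ext (map_comap_eq hφ hn (mem_of_card_eq J.2)) }

/-- The index of `I O` divides `[O : φ(R)] [R : I]`. -/
lemma card_map_dvd (hinj : Function.Injective φ) (I : Ideal R) :
    Nat.card (O ⧸ I.map φ) ∣ Nat.card (R ⧸ I) * φ.toAddMonoidHom.range.index := by
  set H : AddSubgroup R := Submodule.toAddSubgroup I
  have h1 : H.map φ.toAddMonoidHom ≤ φ.toAddMonoidHom.range := AddSubgroup.map_le_range _ _
  have h2 : (H.map φ.toAddMonoidHom).relIndex φ.toAddMonoidHom.range = H.index := by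
    rw [AddMonoidHom.range_eq_map, AddSubgroup.relIndex_map_map_of_injective _ _ hinj,
      AddSubgroup.relIndex_top_right]
  have h3 := AddSubgroup.relIndex_mul_index h1
  rw [h2] at h3
  change (Submodule.toAddSubgroup (I.map φ)).index ∣ H.index * _
  rw [h3]
  refine AddSubgroup.index_dvd_of_le ?_
  rintro _ ⟨x, hx, rfl⟩
  exact Ideal.mem_map_of_mem φ hx

lemma index_range [Module.Finite ℤ O] (hm : m ≠ 0) (hφ : ∀ y : O, ∃ x, φ x = m * y) :
    Sm m φ.toAddMonoidHom.range.index := by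
  have hz : ∀ x : O ⧸ φ.toAddMonoidHom.range, m • x = 0 := by
    intro x
    obtain ⟨y, rfl⟩ := QuotientAddGroup.mk_surjective x
    rw [← QuotientAddGroup.mk_nsmul, QuotientAddGroup.eq_zero_iff]
    obtain ⟨x, hx⟩ := hφ y
    exact ⟨x, by rw [nsmul_eq_mul]; exact hx⟩
  have : Module.Finite ℤ (O ⧸ φ.toAddMonoidHom.range) :=
    Module.Finite.of_surjective (QuotientAddGroup.mk' φ.toAddMonoidHom.range).toIntLinearMap
      (QuotientAddGroup.mk'_surjective _)
  have hfin : Finite (O ⧸ φ.toAddMonoidHom.range) := finite_of_nsmul_eq_zero hm hz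
  have h0 : Nat.card (O ⧸ φ.toAddMonoidHom.range) ≠ 0 := Nat.card_pos.ne'
  exact ⟨h0, fun p hp h => prime_dvd_of_exponent h0 hz hp h⟩

/-- The fibres of `I ↦ I O` have bounded size: since `m J ⊆ φ(I) ⊆ J` for `J = I O`, the ideal `I`
is determined by a subset of `J / m J`, and `J` is generated by at most `rank O` elements. -/
lemma exists_fibre_bound [Module.Free ℤ O] [Module.Finite ℤ O] (hm : m ≠ 0)
    (hinj : Function.Injective φ) (hφ : ∀ y : O, ∃ x, φ x = m * y) :
    ∃ C : ℕ, ∀ (J : Ideal O) (F : Finset (Ideal R)), (∀ I ∈ F, I.map φ = J) → F.card ≤ C := by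
  have : NeZero m := ⟨hm⟩
  refine ⟨2 ^ m ^ Module.finrank ℤ O, fun J F hF => ?_⟩
  set Jz : Submodule ℤ O := J.restrictScalars ℤ
  set r := Module.finrank ℤ Jz
  let b : Module.Basis (Fin r) ℤ Jz := Module.finBasis ℤ Jz
  let Z : Ideal R → Set (Fin r → ZMod m) := fun I =>
    {z | ∃ v : Jz, (∃ x ∈ I, φ x = v) ∧ ∀ i, (b.repr v i : ZMod m) = z i}
  have hle : ∀ I ∈ F, ∀ I' ∈ F, Z I = Z I' → I ≤ I' := by
    intro I hI I' hI' h x hx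
    have hxJ : φ x ∈ J := hF I hI ▸ Ideal.mem_map_of_mem φ hx
    have hz : (fun i => (b.repr (⟨φ x, hxJ⟩ : Jz) i : ZMod m)) ∈ Z I :=
      ⟨⟨φ x, hxJ⟩, ⟨x, hx, rfl⟩, fun i => rfl⟩
    rw [h] at hz
    obtain ⟨v, ⟨x', hx', e⟩, hv⟩ := hz
    choose u hu using fun i => (ZMod.intCast_eq_intCast_iff_dvd_sub _ _ m).1 (hv i)
    have hdiff : (⟨φ x, hxJ⟩ : Jz) - v = m • ∑ i, u i • b i := by
      apply b.repr.injective
      ext i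
      simp only [map_sub, Finsupp.sub_apply, hu, map_nsmul, Finsupp.smul_apply]
      rw [b.repr_sum_self]
      simp
    have hw : ((∑ i, u i • b i : Jz) : O) ∈ I'.map φ := by
      rw [hF I' hI']
      exact (∑ i, u i • b i : Jz).2
    obtain ⟨y, hy, ey⟩ := exists_of_mem_map hφ hw
    have hd := congrArg (Subtype.val) hdiff
    have : φ x = φ (x' + y) := by
      rw [map_add, e, ey]
      have hd' : φ x - (v : O) = m • ((∑ i, u i • b i : Jz) : O) := hd
      rw [nsmul_eq_mul] at hd'
      linear_combination hd'
    rw [hinj this]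
    exact I'.add_mem hx' hy
  have hinjZ : Set.InjOn Z F := fun I hI I' hI' h =>
    le_antisymm (hle I hI I' hI' h) (hle I' hI' I hI h.symm)
  classical
  calc F.card = (F.image Z).card := (Finset.card_image_of_injOn hinjZ).symm
    _ ≤ Fintype.card (Set (Fin r → ZMod m)) := Finset.card_le_univ _
    _ = 2 ^ m ^ r := by simp [ZMod.card]
    _ ≤ 2 ^ m ^ Module.finrank ℤ O :=
        Nat.pow_le_pow_right two_pos (Nat.pow_le_pow_right (Nat.pos_of_ne_zero hm)
          (Submodule.finrank_le Jz))

/-- Sums over ideals `I` of `R` are compared with sums over the ideals `I O`: the fibres are bounded,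
and `1 / [R : I]` is at most `[O : φ(R)] / [O : I O]`. -/
lemma LocSum.transfer [Module.Free ℤ O] [Module.Finite ℤ O] (hm : m ≠ 0)
    (hinj : Function.Injective φ) (hφ : ∀ y : O, ∃ x, φ x = m * y) (h : LocSum O m) :
    LocSum R m := by
  classical
  obtain ⟨C, hC⟩ := exists_fibre_bound hm hinj hφ
  have hD := index_range hm hφ
  set D := φ.toAddMonoidHom.range.index
  let ψ : {I : Ideal R // Sm m (Nat.card (R ⧸ I))} → {J : Ideal O // Sm m (Nat.card (O ⧸ J))} :=
    fun I => ⟨I.1.map φ, (sm_mul_iff.2 ⟨I.2, hD⟩).of_dvd (card_map_dvd hinj I.1)⟩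
  set g : {J : Ideal O // Sm m (Nat.card (O ⧸ J))} → ℝ := fun J => 1 / (Nat.card (O ⧸ J.1) : ℝ)
    with hg
  have hg0 : ∀ J, 0 ≤ g J := fun J => by positivity
  refine summable_of_sum_le (c := D * (C * ∑' J, g J)) (fun I => by positivity) fun F => ?_
  have h1 : ∀ I : {I : Ideal R // Sm m (Nat.card (R ⧸ I))},
      (1 : ℝ) / Nat.card (R ⧸ I.1) ≤ D * g (ψ I) := by
    intro I
    have hle := Nat.le_of_dvd (Nat.pos_of_ne_zero (mul_ne_zero I.2.1 hD.1)) (card_map_dvd hinj I.1)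
    have hR : (0 : ℝ) < Nat.card (R ⧸ I.1) := by exact_mod_cast Nat.pos_of_ne_zero I.2.1
    have hO : (0 : ℝ) < Nat.card (O ⧸ (ψ I).1) := by exact_mod_cast Nat.pos_of_ne_zero (ψ I).2.1
    rw [hg, mul_one_div, div_le_div_iff₀ hR hO, one_mul, mul_comm]
    exact_mod_cast hle
  calc ∑ I ∈ F, (1 : ℝ) / Nat.card (R ⧸ I.1) ≤ ∑ I ∈ F, D * g (ψ I) :=
        Finset.sum_le_sum fun I _ => h1 I
    _ = D * ∑ J ∈ F.image ψ, (F.filter fun I => ψ I = J).card • g J := by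
        rw [← Finset.mul_sum, Finset.sum_comp g ψ]
    _ ≤ D * ∑ J ∈ F.image ψ, C * g J := by
        gcongr with J hJ
        rw [nsmul_eq_mul]
        refine mul_le_mul_of_nonneg_right ?_ (hg0 J)
        have := hC J.1 ((F.filter fun I => ψ I = J).image Subtype.val) (by
          intro I hI
          obtain ⟨I', hI', rfl⟩ := Finset.mem_image.1 hI
          exact congrArg Subtype.val (Finset.mem_filter.1 hI').2)
        rw [Finset.card_image_of_injective _ Subtype.val_injective] at this
        exact_mod_cast this
    _ ≤ D * (C * ∑' J, g J) := by
        rw [← Finset.mul_sum]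
        gcongr
        exact h.sum_le_tsum _ fun J _ => hg0 J

/-- Passing to a subring of finite index changes only finitely many Euler factors. -/
lemma Good.transfer [Module.Free ℤ O] [Module.Finite ℤ O] (hm : m ≠ 0)
    (hinj : Function.Injective φ) (hφ : ∀ y : O, ∃ x, φ x = m * y) {j : ℕ} (h : Good O j) :
    Good R j := by
  obtain ⟨m₁, hm₁, h⟩ := h
  refine ⟨m₁ * m, mul_ne_zero hm₁ hm, fun l hl hdvd => ?_⟩
  obtain ⟨hs, c, hc, hg⟩ := h l hl (dvd_of_mul_right_dvd hdvd)
  obtain ⟨q, rfl⟩ : m ∣ l := dvd_of_mul_left_dvd hdvd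
  have hφ' : ∀ y : O, ∃ x, φ x = (m * q : ℕ) * y := fun y => by
    obtain ⟨x, hx⟩ := hφ (q * y)
    exact ⟨x, by rw [hx]; push_cast; ring⟩
  refine ⟨hs.transfer hl hinj hφ', c, hc, ?_⟩
  have : copPart (cnt R) (m * q) = copPart (cnt O) (m * q) := by
    ext n
    by_cases hn : n.Coprime (m * q)
    · rw [copPart_apply _ hn, copPart_apply _ hn, cnt_eq_of_coprime hinj hφ' hn]
    · rw [copPart_apply' _ hn, copPart_apply' _ hn]
  rwa [this]

end Transfer

/-! ### Rings of integers -/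

open ArithmeticFunction

section NumberField
open NumberField
variable (K : Type*) [Field K] [NumberField K]

/-- The nonzero ideals of `𝓞 K` of norm at most `x` that no member of `S` divides. -/
def sieved (S : Finset (Ideal (𝓞 K))) (x : ℕ) : Set (Ideal (𝓞 K)) :=
  {J | J ≠ ⊥ ∧ Ideal.absNorm J ≤ x ∧ ∀ P ∈ S, ¬ P ∣ J}

lemma sieved_finite (S : Finset (Ideal (𝓞 K))) (x : ℕ) : (sieved K S x).Finite :=
  (Ideal.finite_setOfPred_absNorm_le x).subset fun _ hJ => hJ.2.1

/-- The ideals not divisible by `S` that are divisible by a further prime `P` are the products `P * J`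
with `J` not divisible by `S` and of norm at most `x / N(P)`. -/
lemma ncard_sieved_insert (S : Finset (Ideal (𝓞 K))) {P : Ideal (𝓞 K)} (hP : Prime P)
    (hS : ∀ Q ∈ S, Prime Q) (hPS : P ∉ S) [DecidableEq (Ideal (𝓞 K))] (x : ℕ) :
    (sieved K S x).ncard =
      (sieved K (insert P S) x).ncard + (sieved K S (x / Ideal.absNorm P)).ncard := by
  have hN : 0 < Ideal.absNorm P :=
    Nat.pos_of_ne_zero (Ideal.absNorm_eq_zero_iff.not.2 hP.ne_zero)
  have h1 : sieved K S x = sieved K (insert P S) x ∪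
      Set.image (P * ·) (sieved K S (x / Ideal.absNorm P)) := by
    ext J
    constructor
    · rintro ⟨h0, hx, hJ⟩
      by_cases hPJ : P ∣ J
      · obtain ⟨J', rfl⟩ := hPJ
        refine Or.inr ⟨J', ⟨right_ne_zero_of_mul h0, ?_, fun Q hQ h => hJ Q hQ (h.mul_left P)⟩, rfl⟩
        rw [Nat.le_div_iff_mul_le hN, mul_comm, ← map_mul]
        exact hx
      · refine Or.inl ⟨h0, hx, fun Q hQ => ?_⟩
        rcases Finset.mem_insert.1 hQ with rfl | hQ
        · exact hPJ
        · exact hJ Q hQ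
    · rintro (⟨h0, hx, hJ⟩ | ⟨J', ⟨h0, hx, hJ⟩, rfl⟩)
      · exact ⟨h0, hx, fun Q hQ => hJ Q (Finset.mem_insert_of_mem hQ)⟩
      · refine ⟨mul_ne_zero hP.ne_zero h0, ?_, fun Q hQ h => ?_⟩
        · rw [Nat.le_div_iff_mul_le hN, mul_comm, ← map_mul] at hx
          exact hx
        · rcases (hS Q hQ).dvd_or_dvd h with h | h
          · exact hPS ((associated_iff_eq.1 ((hS Q hQ).associated_of_dvd hP h)) ▸ hQ)
          · exact hJ Q hQ h
  have h2 : Disjoint (sieved K (insert P S) x) (Set.image (P * ·) (sieved K S (x / Ideal.absNorm P))) := by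
    rw [Set.disjoint_left]
    rintro _ ⟨-, -, h⟩ ⟨J, -, rfl⟩
    exact h P (Finset.mem_insert_self _ _) (dvd_mul_right _ _)
  rw [← Set.ncard_image_of_injective (sieved K S (x / Ideal.absNorm P))
    (mul_right_injective₀ hP.ne_zero), h1, Set.ncard_union_eq h2 (sieved_finite K _ _)
      ((sieved_finite K _ _).image _)]

/-- The density is positive by the class number formula, and each sieved prime `P` multiplies it by
`1 - 1 / N(P) > 0`. -/
lemma sieved_density (S : Finset (Ideal (𝓞 K))) (hS : ∀ Q ∈ S, Prime Q) :
    ∃ c : ℝ, 0 < c ∧ Tendsto (fun N : ℕ => ((sieved K S N).ncard : ℝ) / N) atTop (𝓝 c) := by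
  classical
  induction S using Finset.induction_on with
  | empty =>
    refine ⟨_, ?_, ((NumberField.Ideal.tendsto_norm_le_div_atTop₀ K).comp
      (tendsto_natCast_atTop_atTop (R := ℝ))).congr fun N => ?_⟩
    · have h1 := Units.regulator_pos K
      have h2 : 0 < classNumber K := Fintype.card_pos
      have h3 : 0 < Units.torsionOrder K := Nat.pos_of_ne_zero (Units.torsionOrder_ne_zero K)
      have h4 : (discr K : ℝ) ≠ 0 := by exact_mod_cast discr_ne_zero K
      positivity
    · simp only [Function.comp]
      congr 2
      rw [← Nat.card_coe_set_eq]
      refine Nat.card_congr ⟨fun I => ⟨I.1.1, nonZeroDivisors.ne_zero I.1.2, by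
        exact_mod_cast I.2, by simp⟩, fun I => ⟨⟨I.1, mem_nonZeroDivisors_of_ne_zero I.2.1⟩, by
        exact_mod_cast I.2.2.1⟩, fun _ => rfl, fun _ => rfl⟩
  | insert P S hPS ih =>
    obtain ⟨c, hc, h⟩ := ih fun Q hQ => hS Q (Finset.mem_insert_of_mem hQ)
    have hP := hS P (Finset.mem_insert_self _ _)
    have hN0 : Ideal.absNorm P ≠ 0 := Ideal.absNorm_eq_zero_iff.not.2 hP.ne_zero
    have hN1 : Ideal.absNorm P ≠ 1 := fun h => hP.not_isUnit (by
      rw [Ideal.isUnit_iff]; exact Ideal.absNorm_eq_one_iff.1 h)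
    have hN : (1 : ℝ) < Ideal.absNorm P := by exact_mod_cast (by omega : 1 < Ideal.absNorm P)
    have h2 := (h.comp (Nat.tendsto_div_const_atTop hN0)).mul
      (tendsto_div_ratio (Nat.pos_of_ne_zero hN0))
    refine ⟨c - c * (1 / Ideal.absNorm P), ?_, (h.sub h2).congr' ?_⟩
    · have : 1 / (Ideal.absNorm P : ℝ) < 1 := by
        rw [div_lt_one (by linarith)]; exact hN
      nlinarith
    · filter_upwards [eventually_ge_atTop (Ideal.absNorm P)] with N hNP
      have e := ncard_sieved_insert K S hP (fun Q hQ => hS Q (Finset.mem_insert_of_mem hQ)) hPS N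
      have hd : ((N / Ideal.absNorm P : ℕ) : ℝ) ≠ 0 := by
        exact_mod_cast (Nat.div_pos hNP (Nat.pos_of_ne_zero hN0)).ne'
      simp only [Function.comp]
      rw [div_mul_div_cancel₀ hd, ← sub_div, e]
      push_cast
      ring

lemma coprime_card_iff {m : ℕ} (hm : m ≠ 0) {J : Ideal (𝓞 K)} (hJ : J ≠ ⊥) :
    (Nat.card (𝓞 K ⧸ J)).Coprime m ↔
      ∀ P : Ideal (𝓞 K), Prime P → P ∣ Ideal.span {(m : 𝓞 K)} → ¬ P ∣ J := by
  constructor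
  · intro h P hP hPm hPJ
    have h1 := one_mem_of_coprime h (Ideal.le_of_dvd hPJ (card_mem J))
      ((Ideal.dvd_span_singleton).1 hPm)
    exact hP.not_isUnit (by rw [Ideal.isUnit_iff, Ideal.eq_top_iff_one]; exact h1)
  · intro h
    by_contra hc
    have htop : J ⊔ Ideal.span {(m : 𝓞 K)} ≠ ⊤ := by
      intro htop
      rw [Ideal.eq_top_iff_one] at htop
      obtain ⟨p, hp, hpJ, hpm⟩ := Nat.Prime.not_coprime_iff_dvd.1 hc
      have : Finite (𝓞 K ⧸ J) := Ideal.finiteQuotientOfFreeOfNeBot J hJ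
      obtain ⟨j, hj, r, hr, e⟩ := Submodule.mem_sup.1 htop
      obtain ⟨s, rfl⟩ := Ideal.mem_span_singleton'.1 hr
      -- `p` divides `m`, so it is a unit modulo `J`; this contradicts Cauchy's theorem for `𝓞 K ⧸ J`
      have hinj : ∀ x : 𝓞 K ⧸ J, p • x = 0 → x = 0 := by
        intro x hx
        obtain ⟨q, rfl⟩ := hpm
        have e2 : (1 : 𝓞 K ⧸ J) = Ideal.Quotient.mk J s * ((p : ℕ) * (q : ℕ)) := by
          have := congrArg (Ideal.Quotient.mk J) e
          rw [map_add, Ideal.Quotient.eq_zero_iff_mem.2 hj] at this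
          simpa using this.symm
        rw [nsmul_eq_mul] at hx
        calc x = 1 * x := (one_mul x).symm
          _ = Ideal.Quotient.mk J s * q * (p * x) := by rw [e2]; ring
          _ = 0 := by rw [hx, mul_zero]
      have : Fact p.Prime := ⟨hp⟩
      obtain ⟨x, hx⟩ := exists_prime_addOrderOf_dvd_card' p hpJ
      have hx0 := hinj x (by rw [← hx]; exact addOrderOf_nsmul_eq_zero x)
      rw [hx0, addOrderOf_zero] at hx
      exact hp.ne_one hx.symm
    obtain ⟨P, hP, hle⟩ := Ideal.exists_le_maximal _ htop
    have hPJ : P ∣ J := Ideal.dvd_iff_le.2 (le_sup_left.trans hle)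
    have hP0 : P ≠ ⊥ := fun h0 => hJ (by rw [h0] at hPJ; exact zero_dvd_iff.1 hPJ)
    exact h P ((Ideal.prime_iff_isPrime hP0).2 hP.isPrime)
      (Ideal.dvd_iff_le.2 (le_sup_right.trans hle)) hPJ

lemma hasGrowth_copPart_ringOfIntegers {m : ℕ} (hm : m ≠ 0) :
    ∃ c : ℝ, 0 < c ∧ HasGrowth (copPart (cnt (𝓞 K)) m) 0 c := by
  classical
  have hm0 : Ideal.span {(m : 𝓞 K)} ≠ 0 := by
    simpa [Ideal.span_singleton_eq_bot] using hm
  set S : Finset (Ideal (𝓞 K)) :=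
    (UniqueFactorizationMonoid.normalizedFactors (Ideal.span {(m : 𝓞 K)})).toFinset with hSdef
  have hS : ∀ P, P ∈ S ↔ Prime P ∧ P ∣ Ideal.span {(m : 𝓞 K)} := by
    intro P
    rw [hSdef, Multiset.mem_toFinset, Ideal.mem_normalizedFactors_iff hm0]
    constructor
    · rintro ⟨h1, h2⟩
      have h3 := Ideal.dvd_iff_le.2 h2
      have h4 : P ≠ ⊥ := fun h0 => hm0 (by rw [h0] at h3; exact zero_dvd_iff.1 h3)
      exact ⟨(Ideal.prime_iff_isPrime h4).2 h1, h3⟩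
    · rintro ⟨h1, h2⟩
      exact ⟨Ideal.isPrime_of_prime h1, Ideal.dvd_iff_le.1 h2⟩
  obtain ⟨c, hc, h⟩ := sieved_density K S fun Q hQ => ((hS Q).1 hQ).1
  refine ⟨c, hc, h.congr fun N => ?_⟩
  rw [pow_zero, mul_one]
  congr 1
  have hfin := sieved_finite K S N
  rw [Set.ncard_eq_toFinset_card _ hfin,
    Finset.card_eq_sum_card_fiberwise (f := fun J => Nat.card (𝓞 K ⧸ J)) (t := Finset.Ioc 0 N),
    summ, Nat.cast_sum]
  · refine Finset.sum_congr rfl fun n hn => ?_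
    have hn0 : n ≠ 0 := by have := Finset.mem_Ioc.1 hn; omega
    have key : ∀ J : Ideal (𝓞 K), (J ∈ sieved K S N ∧ Nat.card (𝓞 K ⧸ J) = n) ↔
        (n.Coprime m ∧ Nat.card (𝓞 K ⧸ J) = n) := by
      intro J
      refine and_congr_left fun hJ => ?_
      have hJ0 : J ≠ ⊥ := fun h0 => hn0 (by
        rw [← hJ, ← Submodule.cardQuot_apply, ← Ideal.absNorm_apply, h0, Ideal.absNorm_bot])
      rw [← hJ, coprime_card_iff K hm hJ0]
      constructor
      · exact fun h P h1 h2 => h.2.2 P ((hS P).2 ⟨h1, h2⟩)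
      · refine fun h => ⟨hJ0, ?_, fun P hP => h P ((hS P).1 hP).1 ((hS P).1 hP).2⟩
        rw [Ideal.absNorm_apply, Submodule.cardQuot_apply, hJ]
        exact (Finset.mem_Ioc.1 hn).2
    by_cases hcop : n.Coprime m
    · rw [copPart_apply _ hcop, cnt_apply _ hn0]
      congr 1
      rw [← Nat.card_eq_finsetCard]
      refine Nat.card_congr (Equiv.subtypeEquivRight fun J => ?_)
      rw [Finset.mem_filter, hfin.mem_toFinset, key]
      exact and_iff_right hcop
    · rw [copPart_apply' _ hcop, Nat.cast_eq_zero, Finset.card_eq_zero, Finset.filter_eq_empty_iff]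
      intro J hJ hJn
      exact hcop ((key J).1 ⟨hfin.mem_toFinset.1 hJ, hJn⟩).1
  · intro J hJ
    have hJ := hfin.mem_toFinset.1 hJ
    have h1 := Submodule.cardQuot_apply J
    rw [← Ideal.absNorm_apply] at h1
    simp only [Finset.coe_Ioc, Set.mem_Ioc]
    rw [← h1]
    exact ⟨Nat.pos_of_ne_zero (Ideal.absNorm_eq_zero_iff.not.2 hJ.1), hJ.2.1⟩

/-- Local summability comes for free from the growth of the two counts: with `w` and `t` the smooth
and coprime parts, truncating `a = w * t` at `n < M` and letting `N → ∞` gives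
`c * ∑_{n < M} w n / n ≤ C` for every `M`. -/
lemma good_ringOfIntegers : Good (𝓞 K) 0 := by
  refine ⟨1, one_ne_zero, fun m hm _ => ⟨?_, hasGrowth_copPart_ringOfIntegers K hm⟩⟩
  rw [locSum_iff]
  obtain ⟨c, hc, ht⟩ := hasGrowth_copPart_ringOfIntegers K hm
  obtain ⟨C, -, hC⟩ := hasGrowth_copPart_ringOfIntegers K one_ne_zero
  have e1 : copPart (cnt (𝓞 K)) 1 = cnt (𝓞 K) := by
    ext n
    exact copPart_apply _ (Nat.coprime_one_right n)
  rw [e1] at hC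
  have hw := smoothPart_nonneg (cnt_nonneg (𝓞 K)) m
  have ht0 := copPart_nonneg (cnt_nonneg (𝓞 K)) m
  refine summable_of_sum_range_le (c := C / c) (fun n => div_nonneg (hw n) n.cast_nonneg) fun M => ?_
  rw [le_div_iff₀ hc, Finset.sum_mul]
  have hl : Tendsto (fun N : ℕ => ∑ n ∈ Finset.range M, smoothPart (cnt (𝓞 K)) m n *
      (summ (copPart (cnt (𝓞 K)) m) (N / n) / (N * ell N ^ 0))) atTop
      (𝓝 (∑ n ∈ Finset.range M, smoothPart (cnt (𝓞 K)) m n / n * c)) := by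
    refine tendsto_finsetSum _ fun n _ => ?_
    rcases Nat.eq_zero_or_pos n with rfl | hn
    · simp
    · have := (ht.comp_div hn).const_mul (smoothPart (cnt (𝓞 K)) m n)
      rwa [mul_div_assoc', ← div_mul_eq_mul_div] at this
  refine le_of_tendsto_of_tendsto hl hC ?_
  filter_upwards [eventually_ge_atTop M] with N hN
  have hsum := summ_mul (smoothPart (cnt (𝓞 K)) m) (copPart (cnt (𝓞 K)) m) N
  rw [smoothPart_mul_copPart (cnt_isMultiplicative (𝓞 K)) m] at hsum
  rw [hsum, Finset.sum_div]
  simp only [mul_div_assoc]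
  have hterm : ∀ n, 0 ≤ smoothPart (cnt (𝓞 K)) m n *
      (summ (copPart (cnt (𝓞 K)) m) (N / n) / (N * ell N ^ 0)) := fun n =>
    mul_nonneg (hw n) (div_nonneg (summ_nonneg ht0 _) (by positivity))
  rw [Finset.sum_subset (Finset.subset_union_left (s₁ := Finset.Ioc 0 N) (s₂ := {0})) ?_]
  · refine Finset.sum_le_sum_of_subset_of_nonneg ?_ fun n _ _ => hterm n
    intro n hn
    have := Finset.mem_range.1 hn
    simp only [Finset.mem_union, Finset.mem_Ioc, Finset.mem_singleton]
    omega
  · intro n hn hn'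
    have : n = 0 := by
      simpa [hn'] using (Finset.mem_union.1 hn).resolve_left hn'
    simp [this]

end NumberField

/-! ### Quotients of the integer polynomial ring -/

open ArithmeticFunction

section Poly
open Polynomial NumberField

lemma exists_clear_denom (p : ℚ[X]) :
    ∃ m : ℕ, m ≠ 0 ∧ ∃ q : ℤ[X], q.map (algebraMap ℤ ℚ) = (m : ℚ[X]) * p := by
  obtain ⟨b, hb, h⟩ := IsLocalization.integerNormalization_spec (nonZeroDivisors ℤ) p
  have hb0 : b ≠ 0 := nonZeroDivisors.ne_zero hb
  refine ⟨b.natAbs, Int.natAbs_ne_zero.2 hb0,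
    C b.sign * IsLocalization.integerNormalization (nonZeroDivisors ℤ) p, ?_⟩
  have e : ((b.natAbs : ℕ) : ℚ[X]) = ((b.sign * b : ℤ) : ℚ[X]) := by
    rw [Int.sign_mul_self_eq_abs, Int.abs_eq_natAbs]
    rfl
  rw [Polynomial.map_mul, h, e, zsmul_eq_mul, map_C, Int.cast_mul, mul_assoc]
  simp

/-- `ℤ[X]/(g)` is an order in the number field `ℚ[X]/(g)`. -/
lemma good_irreducible {g : ℤ[X]} (hg : g.Monic) (hirr : Irreducible g) :
    Good (ℤ[X] ⧸ Ideal.span {g}) 0 := by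
  set G : ℚ[X] := g.map (algebraMap ℤ ℚ) with hG
  have hGirr : Irreducible G := (hg.irreducible_iff_irreducible_map_fraction_map (K := ℚ)).1 hirr
  have : Fact (Irreducible G) := ⟨hGirr⟩
  have hGm : G.Monic := hg.map _
  have : FiniteDimensional ℚ (AdjoinRoot G) := hGm.finite_adjoinRoot
  have : CharZero (AdjoinRoot G) := algebraRat.charZero _
  have : NumberField (AdjoinRoot G) := ⟨⟩
  set K := AdjoinRoot G with hK
  have hev : ∀ p : ℤ[X], aeval (AdjoinRoot.root G) p =
      AdjoinRoot.mk G (p.map (algebraMap ℤ ℚ)) := by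
    intro p
    rw [← AdjoinRoot.aeval_eq, aeval_map_algebraMap]
  have hint : IsIntegral ℤ (AdjoinRoot.root G) := ⟨g, hg, by
    rw [← aeval_def, hev, ← hG, AdjoinRoot.mk_self]⟩
  let θ : 𝓞 K := ⟨AdjoinRoot.root G, hint⟩
  have hθ : ∀ p : ℤ[X], algebraMap (𝓞 K) K (aeval θ p) =
      AdjoinRoot.mk G (p.map (algebraMap ℤ ℚ)) := by
    intro p
    rw [← hev, ← aeval_algebraMap_apply]
    rfl
  have hinjK := FaithfulSMul.algebraMap_injective (𝓞 K) K
  let φ : (ℤ[X] ⧸ Ideal.span {g}) →+* 𝓞 K := Ideal.Quotient.lift (Ideal.span {g})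
    (aeval θ : ℤ[X] →ₐ[ℤ] 𝓞 K).toRingHom (by
      intro a ha
      obtain ⟨b, rfl⟩ := Ideal.mem_span_singleton.1 ha
      apply hinjK
      change algebraMap (𝓞 K) K (aeval θ (g * b)) = _
      rw [hθ, Polynomial.map_mul, map_mul, ← hG, AdjoinRoot.mk_self, zero_mul, _root_.map_zero])
  have hφmk : ∀ p, φ (Ideal.Quotient.mk _ p) = aeval θ p := fun p => rfl
  have hinj : Function.Injective φ := by
    rw [injective_iff_map_eq_zero]
    intro x hx
    obtain ⟨p, rfl⟩ := Ideal.Quotient.mk_surjective x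
    rw [hφmk] at hx
    have h := hθ p
    rw [hx, _root_.map_zero, eq_comm, AdjoinRoot.mk_eq_zero, hG] at h
    rw [Ideal.Quotient.eq_zero_iff_mem, Ideal.mem_span_singleton]
    exact (map_dvd_map _ (algebraMap ℤ ℚ).injective_int hg).1 h
  have hdenom : ∀ y : 𝓞 K, ∃ m : ℕ, m ≠ 0 ∧ ∃ x, φ x = m * y := by
    intro y
    obtain ⟨p, hp⟩ := AdjoinRoot.mk_surjective (algebraMap (𝓞 K) K y)
    obtain ⟨m, hm, q, hq⟩ := exists_clear_denom p
    refine ⟨m, hm, Ideal.Quotient.mk _ q, hinjK ?_⟩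
    rw [hφmk, hθ, hq, map_mul, hp, map_mul]
    simp
  have hall : ∀ s : Finset (𝓞 K), ∃ m : ℕ, m ≠ 0 ∧ ∀ y ∈ s, ∃ x, φ x = m * y := by
    classical
    intro s
    induction s using Finset.induction_on with
    | empty => exact ⟨1, one_ne_zero, by simp⟩
    | insert a s _ ih =>
      obtain ⟨m, hm, h⟩ := ih
      obtain ⟨m', hm', x', hx'⟩ := hdenom a
      refine ⟨m * m', mul_ne_zero hm hm', fun y hy => ?_⟩
      rcases Finset.mem_insert.1 hy with rfl | hy
      · exact ⟨m * x', by rw [map_mul, hx', map_natCast]; push_cast; ring⟩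
      · obtain ⟨x, hx⟩ := h y hy
        exact ⟨m' * x, by rw [map_mul, hx, map_natCast]; push_cast; ring⟩
  obtain ⟨s, hs⟩ := (Module.Finite.fg_top : (⊤ : Submodule ℤ (𝓞 K)).FG)
  obtain ⟨m, hm, h⟩ := hall s
  refine Good.transfer hm hinj (fun y => ?_) (good_ringOfIntegers K)
  have hy : y ∈ Submodule.span ℤ (s : Set (𝓞 K)) := hs ▸ Submodule.mem_top
  induction hy using Submodule.span_induction with
  | mem y hy => exact h y hy
  | zero => exact ⟨0, by simp⟩
  | add a b _ _ ha hb =>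
    obtain ⟨x, hx⟩ := ha
    obtain ⟨x', hx'⟩ := hb
    exact ⟨x + x', by rw [map_add, hx, hx', mul_add]⟩
  | smul r a _ ha =>
    obtain ⟨x, hx⟩ := ha
    exact ⟨r • x, by rw [map_zsmul, hx, mul_smul_comm]⟩

/-- `ℤ[X]/(fg)` has finite index in `ℤ[X]/(f) × ℤ[X]/(g)` when `f` and `g` are coprime over `ℚ`. -/
lemma good_mul {f g : ℤ[X]} (hf : f.Monic) (hg : g.Monic)
    (hcop : IsCoprime (f.map (algebraMap ℤ ℚ)) (g.map (algebraMap ℤ ℚ))) {j : ℕ}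
    (hF : Good (ℤ[X] ⧸ Ideal.span {f}) j) (hG : Good (ℤ[X] ⧸ Ideal.span {g}) 0) :
    Good (ℤ[X] ⧸ Ideal.span {f * g}) (j + 1) := by
  have := hf.free_quotient
  have := hf.finite_quotient
  have := hg.free_quotient
  have := hg.finite_quotient
  have hinjQ : Function.Injective (algebraMap ℤ ℚ) := (algebraMap ℤ ℚ).injective_int
  -- Bézout over `ℚ`, with denominators cleared
  obtain ⟨m, hm, u, v, huv⟩ : ∃ m : ℕ, m ≠ 0 ∧ ∃ u v : ℤ[X], u * f + v * g = (m : ℤ[X]) := by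
    obtain ⟨a, b, hab⟩ := hcop
    obtain ⟨m, hm, u, hu⟩ := exists_clear_denom a
    obtain ⟨n, hn, v, hv⟩ := exists_clear_denom b
    refine ⟨m * n, mul_ne_zero hm hn, n * u, m * v, map_injective _ hinjQ ?_⟩
    simp only [Polynomial.map_add, Polynomial.map_mul, hu, hv, Polynomial.map_natCast]
    push_cast
    linear_combination (m : ℚ[X]) * n * hab
  let φ : (ℤ[X] ⧸ Ideal.span {f * g}) →+* (ℤ[X] ⧸ Ideal.span {f}) × (ℤ[X] ⧸ Ideal.span {g}) :=
    RingHom.prod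
      (Ideal.Quotient.factor (Ideal.span_singleton_le_span_singleton.2 (dvd_mul_right f g)))
      (Ideal.Quotient.factor (Ideal.span_singleton_le_span_singleton.2 (dvd_mul_left g f)))
  have hφ : ∀ p, φ (Ideal.Quotient.mk _ p) = (Ideal.Quotient.mk _ p, Ideal.Quotient.mk _ p) :=
    fun p => rfl
  refine Good.transfer (φ := φ) hm ?_ ?_ (hF.prod hG)
  · rw [injective_iff_map_eq_zero]
    intro x hx
    obtain ⟨p, rfl⟩ := Ideal.Quotient.mk_surjective x
    rw [hφ, Prod.mk_eq_zero, Ideal.Quotient.eq_zero_iff_mem, Ideal.Quotient.eq_zero_iff_mem,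
      Ideal.mem_span_singleton, Ideal.mem_span_singleton] at hx
    rw [Ideal.Quotient.eq_zero_iff_mem, Ideal.mem_span_singleton,
      ← map_dvd_map _ hinjQ (hf.mul hg), Polynomial.map_mul]
    exact hcop.mul_dvd (Polynomial.map_dvd _ hx.1) (Polynomial.map_dvd _ hx.2)
  · rintro ⟨x, y⟩
    obtain ⟨a, rfl⟩ := Ideal.Quotient.mk_surjective x
    obtain ⟨b, rfl⟩ := Ideal.Quotient.mk_surjective y
    refine ⟨Ideal.Quotient.mk _ (v * g * a + u * f * b), ?_⟩
    rw [hφ]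
    refine Prod.ext ?_ ?_
    · change _ = ((m : ℕ) : ℤ[X] ⧸ Ideal.span {f}) * Ideal.Quotient.mk _ a
      rw [← map_natCast (Ideal.Quotient.mk (Ideal.span {f})), ← map_mul,
        Ideal.Quotient.mk_eq_mk_iff_sub_mem, Ideal.mem_span_singleton]
      exact ⟨u * (b - a), by linear_combination a * huv⟩
    · change _ = ((m : ℕ) : ℤ[X] ⧸ Ideal.span {g}) * Ideal.Quotient.mk _ b
      rw [← map_natCast (Ideal.Quotient.mk (Ideal.span {g})), ← map_mul,
        Ideal.Quotient.mk_eq_mk_iff_sub_mem, Ideal.mem_span_singleton]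
      exact ⟨v * (a - b), by linear_combination b * huv⟩

lemma isCoprime_of_ne {g h : ℤ[X]} (hg : g.Monic) (hh : h.Monic) (hgi : Irreducible g)
    (hhi : Irreducible h) (hne : g ≠ h) :
    IsCoprime (g.map (algebraMap ℤ ℚ)) (h.map (algebraMap ℤ ℚ)) := by
  have h1 := (hg.irreducible_iff_irreducible_map_fraction_map (K := ℚ)).1 hgi
  have h2 := (hh.irreducible_iff_irreducible_map_fraction_map (K := ℚ)).1 hhi
  refine (EuclideanDomain.dvd_or_coprime _ _ h1).symm.resolve_right fun hd => hne ?_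
  exact map_injective _ (algebraMap ℤ ℚ).injective_int
    (eq_of_monic_of_associated (hg.map _) (hh.map _) (h1.associated_of_dvd h2 hd))

lemma good_prod_irreducible (j : ℕ) (g : Fin (j + 1) → ℤ[X]) (hirr : ∀ i, Irreducible (g i))
    (hmonic : ∀ i, (g i).Monic) (hdist : Function.Injective g) :
    Good (ℤ[X] ⧸ Ideal.span {∏ i, g i}) j := by
  induction j with
  | zero =>
    rw [Fin.prod_univ_one]
    exact good_irreducible (hmonic 0) (hirr 0)
  | succ j ih =>
    rw [Fin.prod_univ_castSucc]
    refine good_mul (monic_prod_of_monic _ _ fun i _ => hmonic _) (hmonic _) ?_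
      (ih (fun i => g i.castSucc) (fun i => hirr _) (fun i => hmonic _)
        (hdist.comp (Fin.castSucc_injective _))) (good_irreducible (hmonic _) (hirr _))
    rw [Polynomial.map_prod]
    exact IsCoprime.prod_left fun i _ => isCoprime_of_ne (hmonic _) (hmonic _) (hirr _) (hirr _)
      (hdist.ne (Fin.castSucc_lt_last i).ne)

end Poly

/-- The normalisation `1 + log N` may be replaced by `log N`. -/
lemma HasGrowth.tendsto_log {a : ArithmeticFunction ℝ} {j : ℕ} {c : ℝ} (h : HasGrowth a j c) :
    Tendsto (fun N : ℕ => summ a N / (N * Real.log N ^ j)) atTop (𝓝 c) := by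
  have hlog : Tendsto (fun N : ℕ => Real.log N) atTop atTop :=
    Real.tendsto_log_atTop.comp tendsto_natCast_atTop_atTop
  have h1 : Tendsto (fun N : ℕ => ell N / Real.log N) atTop (𝓝 1) := by
    have := (tendsto_inv_atTop_zero.comp hlog).add_const 1
    rw [zero_add] at this
    refine this.congr' ?_
    filter_upwards [hlog.eventually_gt_atTop 0] with N hN
    simp only [Function.comp, ell]
    field_simp
  have h2 := h.mul (h1.pow j)
  rw [one_pow, mul_one] at h2
  refine h2.congr' ?_
  filter_upwards [hlog.eventually_gt_atTop 0] with N hN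
  have := (ell_pos N).ne'
  rw [div_pow]
  field_simp

end IdealCount

/-- For `f = g₁⋯g_k` a product of `k` pairwise distinct monic irreducible polynomials over ℤ,
the number of finite-index ideals of `ℤ[X]/(f)` of index at most `N` grows like
`c·N·(log N)^{k-1}` for some constant `c > 0`. -/
theorem ideal_count_quotient_separable (k : ℕ) (hk : 0 < k) (g : Fin k → Polynomial ℤ)
    (hirr : ∀ i, Irreducible (g i)) (hmonic : ∀ i, (g i).Monic)
    (hdist : Function.Injective g)
    (f : Polynomial ℤ) (hf : f = ∏ i, g i) (hfmonic : f.Monic) :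
    ∃ c : ℝ, 0 < c ∧
      Tendsto (fun N : ℕ => (∑ n ∈ Finset.Icc 1 N,
          (Nat.card {I : Ideal (Polynomial ℤ ⧸ Ideal.span {f}) //
            Nat.card ((Polynomial ℤ ⧸ Ideal.span {f}) ⧸ I) = n} : ℝ)) /
        ((N : ℝ) * (Real.log N) ^ (k - 1)))
        atTop (𝓝 c) := by
  obtain ⟨j, rfl⟩ : ∃ j, k = j + 1 := ⟨k - 1, by omega⟩
  have := hfmonic.finite_quotient
  have hgood : IdealCount.Good (Polynomial ℤ ⧸ Ideal.span {f}) j := by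
    rw [hf]
    exact IdealCount.good_prod_irreducible j g hirr hmonic hdist
  obtain ⟨c, hc, h⟩ := hgood.hasGrowth
  refine ⟨c, hc, h.tendsto_log.congr fun N => ?_⟩
  rw [Nat.add_sub_cancel]
  congr 1
  refine Finset.sum_congr ?_ fun n hn => IdealCount.cnt_apply _ ?_
  · ext n
    simp only [Finset.mem_Ioc, Finset.mem_Icc]
    omega
  · have := Finset.mem_Icc.1 hn
    omega
end
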